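/- arXiv:2403.18653 — 3 statements merged into one kernel-verified Lean document; each statement's English description precedes it below -/
import Mathlib

section
/- Let p be a prime and X a finite indecomposable cycle set with |X| = p² that is retractable, i.e. there exist x ≠ y in X with σ_x = σ_y. Then X is isomorphic to one of the following: (1) ℤ_{p²} with x·y = y+1; (2) ℤ_p × ℤ_p with (a,x)·(b,y) = (b+1, y + χ₀(b)·S + Φ(b−a)) for some non-constant map Φ : ℤ_p → ℤ_p with Φ(0) = 0 and some S ∈ ℤ_p. Moreover, in case (2) the parameters (S,Φ) and (S′,Φ′) define isomorphic cycle sets if and only if S′ = αS and Φ′ = αΦ for some α ∈ ℤ_p ∖ {0}. -/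
/-- A (non-degenerate) cycle set: a set with a binary operation satisfying
(C1) `(x·y)·(x·z) = (y·x)·(y·z)`, (C2) each left translation is bijective and
(C3) the square map `x ↦ x·x` is bijective. -/
structure CycleSet (X : Type*) where
  op : X → X → X
  c1 : ∀ x y z : X, op (op x y) (op x z) = op (op y x) (op y z)
  c2 : ∀ x : X, Function.Bijective (op x)
  c3 : Function.Bijective (fun x : X => op x x)

namespace CycleSet

variable {X Y : Type*}

/-- The permutation `σ_x : y ↦ x·y`. -/
noncomputable def sigma (C : CycleSet X) (x : X) : Equiv.Perm X :=
  Equiv.ofBijective (C.op x) (C.c2 x)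

/-- The permutation group `𝒢(X)` generated by all `σ_x`. -/
noncomputable def permGroup (C : CycleSet X) : Subgroup (Equiv.Perm X) :=
  Subgroup.closure (Set.range C.sigma)

/-- A cycle set is indecomposable if `𝒢(X)` acts transitively on `X`. -/
def Indecomposable (C : CycleSet X) : Prop :=
  ∀ x y : X, ∃ g ∈ C.permGroup, g x = y

/-- A cycle set is irretractable if `σ_x = σ_y` implies `x = y`. -/
def Irretractable (C : CycleSet X) : Prop :=
  ∀ x y : X, C.op x = C.op y → x = y

/-- `f` is an isomorphism of cycle sets from `C` to `D`. -/
def IsIso (C : CycleSet X) (D : CycleSet Y) (f : X → Y) : Prop :=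
  Function.Bijective f ∧ ∀ x y : X, f (C.op x y) = D.op (f x) (f y)

/-- Two cycle sets are isomorphic if there is an isomorphism between them. -/
def Iso (C : CycleSet X) (D : CycleSet Y) : Prop :=
  ∃ f : X → Y, C.IsIso D f

end CycleSet

namespace CycleSet

variable {X : Type*}

@[simp] theorem sigma_apply (C : CycleSet X) (x y : X) : C.sigma x y = C.op x y := rfl

theorem sigma_comm (C : CycleSet X) (x y : X) :
    C.sigma (C.sigma x y) * C.sigma x = C.sigma (C.sigma y x) * C.sigma y := by
  ext z
  exact C.c1 x y z

instance foldLeftComm (C : CycleSet X) :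
    LeftCommutative (fun (x : X) (g : Equiv.Perm X) => C.sigma (g x) * g) where
  left_comm x y g := by
    have h := C.sigma_comm (g x) (g y)
    simp only [Equiv.Perm.mul_apply, ← mul_assoc]
    rw [h]

/-- The permutation attached to a multiset (I-structure). -/
noncomputable def F (C : CycleSet X) (m : Multiset X) : Equiv.Perm X :=
  Multiset.foldr (fun (x : X) (g : Equiv.Perm X) => C.sigma (g x) * g) 1 m

@[simp] theorem F_zero (C : CycleSet X) : C.F 0 = 1 := rfl

@[simp] theorem F_cons (C : CycleSet X) (x : X) (m : Multiset X) :
    C.F (x ::ₘ m) = C.sigma (C.F m x) * C.F m :=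
  Multiset.foldr_cons _ _ _ _

theorem F_singleton (C : CycleSet X) (x : X) : C.F {x} = C.sigma x := by
  rw [← Multiset.cons_zero, F_cons]; simp

theorem F_add (C : CycleSet X) (m n : Multiset X) :
    C.F (m + n) = C.F (m.map (C.F n)) * C.F n := by
  induction m using Multiset.induction with
  | empty => simp
  | cons x m ih =>
    rw [Multiset.cons_add, F_cons, ih, Multiset.map_cons, F_cons, mul_assoc]
    simp

theorem F_mul (C : CycleSet X) (m n : Multiset X) :
    C.F m * C.F n = C.F (m.map (C.F n).symm + n) := by
  rw [F_add, Multiset.map_map]; simp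

theorem F_mem (C : CycleSet X) (m : Multiset X) : C.F m ∈ C.permGroup := by
  induction m using Multiset.induction with
  | empty => exact C.permGroup.one_mem
  | cons x m ih =>
    rw [F_cons]
    exact C.permGroup.mul_mem (Subgroup.subset_closure ⟨_, rfl⟩) ih

/-- The range of `F` as a submonoid. -/
noncomputable def Fmon (C : CycleSet X) : Submonoid (Equiv.Perm X) where
  carrier := Set.range C.F
  one_mem' := ⟨0, rfl⟩
  mul_mem' := by
    rintro _ _ ⟨m, rfl⟩ ⟨n, rfl⟩
    exact ⟨_, (C.F_mul m n).symm⟩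

theorem exists_F [Finite X] (C : CycleSet X) {g : Equiv.Perm X} (hg : g ∈ C.permGroup) :
    ∃ m, C.F m = g := by
  suffices g ∈ C.Fmon from this
  induction hg using Subgroup.closure_induction with
  | mem x hx =>
    obtain ⟨y, rfl⟩ := hx
    exact ⟨{y}, C.F_singleton y⟩
  | one => exact C.Fmon.one_mem
  | mul x y _ _ hx hy => exact C.Fmon.mul_mem hx hy
  | inv x _ hx =>
    have : x⁻¹ = x ^ (orderOf x - 1) := by
      rw [inv_eq_iff_mul_eq_one, ← pow_succ', Nat.sub_add_cancel (orderOf_pos x), pow_orderOf_eq_one]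
    rw [this]
    exact C.Fmon.pow_mem hx _

theorem F_congr_add (C : CycleSet X) {m m' : Multiset X} (n : Multiset X) (h : C.F m = C.F m') :
    C.F (m + n) = C.F (m' + n) := by
  rw [add_comm m, add_comm m', F_add, F_add, h]

theorem F_congr_map (C : CycleSet X) {m m' : Multiset X} (n : Multiset X) (h : C.F m = C.F m') :
    C.F (m.map (C.F n)) = C.F (m'.map (C.F n)) := by
  have := C.F_congr_add n h
  rw [F_add, F_add] at this
  exact mul_right_cancel this

/-- The additive congruence given by equality of permutations. -/
noncomputable def con (C : CycleSet X) : AddCon (Multiset X) where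
  r m n := C.F m = C.F n
  iseqv := ⟨fun _ => rfl, fun h => h.symm, fun h h' => h.trans h'⟩
  add' := by
    intro w x y z h h'
    rw [C.F_congr_add y h, add_comm x y, add_comm x z, C.F_congr_add x h']

theorem con_eq (C : CycleSet X) (m n : Multiset X) :
    (m : C.con.Quotient) = (n : C.con.Quotient) ↔ C.F m = C.F n :=
  C.con.eq

theorem con_neg [Finite X] (C : CycleSet X) (a : C.con.Quotient) : ∃ b, b + a = 0 := by
  induction a using AddCon.induction_on with
  | H m =>
    obtain ⟨k, hk⟩ := C.exists_F (C.permGroup.inv_mem (C.F_mem m))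
    refine ⟨((k.map (C.F m).symm : Multiset X) : C.con.Quotient), ?_⟩
    rw [← AddCon.coe_add, ← AddCon.coe_zero, con_eq, ← F_mul, hk]
    simp

/-- The additive group of the permutation brace. -/
@[reducible]
noncomputable def conGroup [Finite X] (C : CycleSet X) : AddCommGroup C.con.Quotient :=
  letI : Neg C.con.Quotient := ⟨fun a => (C.con_neg a).choose⟩
  { (inferInstance : AddCommMonoid C.con.Quotient) with
    neg := fun a => (C.con_neg a).choose
    zsmul := zsmulRec (fun k a => k • a)
    zsmul_zero' := fun a => zero_nsmul a
    zsmul_succ' := fun n a => succ_nsmul a n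
    neg_add_cancel := fun a => (C.con_neg a).choose_spec }

/-- Elements of the additive group correspond to elements of the permutation group. -/
theorem con_card [Finite X] (C : CycleSet X) :
    Nonempty (C.con.Quotient ≃ C.permGroup) := by
  refine ⟨Equiv.ofBijective (Quotient.lift (fun m => (⟨C.F m, C.F_mem m⟩ : C.permGroup)) ?_) ?_⟩
  · intro a b h
    exact Subtype.ext h
  · constructor
    · rintro ⟨a⟩ ⟨b⟩ h
      exact (C.con_eq a b).2 (congrArg Subtype.val h)
    · rintro ⟨g, hg⟩
      obtain ⟨m, rfl⟩ := C.exists_F hg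
      exact ⟨(m : C.con.Quotient), rfl⟩

/-- The action of an element of the permutation group on the additive group. -/
noncomputable def conMap (C : CycleSet X) (n : Multiset X) : C.con.Quotient →+ C.con.Quotient :=
  C.con.lift ((C.con.mk').comp (Multiset.mapAddMonoidHom (C.F n))) (by
    intro m m' h
    exact (C.con_eq _ _).2 (C.F_congr_map n h))

theorem conMap_coe (C : CycleSet X) (n m : Multiset X) :
    C.conMap n (m : C.con.Quotient) = ((m.map (C.F n) : Multiset X) : C.con.Quotient) := rfl

theorem conMap_iter (C : CycleSet X) (n m : Multiset X) (k : ℕ) :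
    (C.conMap n)^[k] (m : C.con.Quotient) =
      ((m.map ((C.F n) ^ k : Equiv.Perm X) : Multiset X) : C.con.Quotient) := by
  induction k with
  | zero => simp
  | succ k ih =>
    rw [Function.iterate_succ_apply', ih, conMap_coe, Multiset.map_map, pow_succ']
    rfl

end CycleSet

theorem torsion_fix {A : Type*} [AddCommGroup A] [Finite A] {p r : ℕ} (hp : p.Prime)
    (hA : Nat.card A = p * r) (hr : ¬ p ∣ r) (t : A →+ A) (ht : ∀ a, t^[p] a = a) :
    (∀ a, t (r • a) = r • a) ∧ (∀ a : A, p • (r • a) = 0) ∧ ∃ b : A, r • b ≠ 0 := by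
  classical
  have := Fact.mk hp
  have := Fintype.ofFinite A
  have hpr : ∀ a : A, p • (r • a) = 0 := by
    intro a
    rw [← mul_nsmul', ← hA]
    exact card_nsmul_eq_zero'
  obtain ⟨b, hb⟩ := exists_prime_addOrderOf_dvd_card (G := A) p
    (by rw [← Nat.card_eq_fintype_card, hA]; exact dvd_mul_right _ _)
  have hpb : p • b = 0 := by rw [← hb]; exact addOrderOf_nsmul_eq_zero b
  have hb0 : b ≠ 0 := by
    rintro rfl
    rw [addOrderOf_zero] at hb
    exact hp.one_lt.ne hb
  let B : AddSubgroup A := (nsmulAddMonoidHom (α := A) p).ker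
  have hB : ∀ a, a ∈ B ↔ p • a = 0 := fun a => Iff.rfl
  have hcard : Nat.card B = p := by
    have h1 : IsPGroup p (Multiplicative B) := by
      intro g
      refine ⟨1, ?_⟩
      rw [pow_one]
      apply Multiplicative.toAdd.injective
      apply Subtype.ext
      exact (hB _).1 (Multiplicative.toAdd g).2
    obtain ⟨n, hn⟩ := IsPGroup.iff_card.1 h1
    have hn' : Nat.card B = p ^ n := hn
    have h2 : Nat.card B ∣ p * r := hA ▸ AddSubgroup.card_addSubgroup_dvd_card B
    rw [hn'] at h2 ⊢
    rcases n with _ | _ | n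
    · exfalso
      have : Subsingleton B := (Nat.card_eq_one_iff_unique.1 (by simpa using hn')).1
      have := congrArg Subtype.val (Subsingleton.elim (⟨b, hpb⟩ : B) 0)
      exact hb0 this
    · simp
    · exfalso
      apply hr
      have : p * p ∣ p * r := dvd_trans ⟨p ^ n, by ring⟩ h2
      exact Nat.dvd_of_mul_dvd_mul_left hp.pos this
  let f : Function.End B := fun x => ⟨t x.1, by rw [hB, ← map_nsmul, (hB _).1 x.2, map_zero]⟩
  have hfk : ∀ (k : ℕ) (x : B), ((f ^ k) x).1 = t^[k] x.1 := by
    intro k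
    induction k with
    | zero => intro x; rfl
    | succ k ih =>
      intro x
      rw [pow_succ', Function.iterate_succ_apply', ← ih]
      rfl
  have hf : f ^ p ^ 1 = 1 := by
    funext x
    apply Subtype.ext
    rw [hfk, pow_one, ht]
    rfl
  have h3 := Equiv.Perm.card_fixedPoints_modEq hf
  have hfix : ∀ x : B, f x = x := by
    rw [← Nat.card_eq_fintype_card, ← Nat.card_eq_fintype_card, hcard] at h3
    have h4 : p ∣ Nat.card (Function.fixedPoints f) :=
      (Nat.modEq_zero_iff_dvd).1 (h3.symm.trans (by simp [Nat.ModEq]))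
    have h5 : 0 < Nat.card (Function.fixedPoints f) :=
      Nat.card_pos_iff.2 ⟨⟨⟨0, Subtype.ext (map_zero t)⟩⟩, inferInstance⟩
    have h6 : Nat.card B ≤ (Function.fixedPoints f).ncard := by
      rw [hcard]; exact Nat.le_of_dvd h5 h4
    intro x
    have h7 : Function.fixedPoints f = Set.univ := by
      apply Set.eq_of_subset_of_ncard_le (Set.subset_univ _)
      rwa [Set.ncard_univ]
    have : x ∈ Function.fixedPoints f := by rw [h7]; trivial
    exact this
  refine ⟨fun a => ?_, hpr, b, ?_⟩
  · exact congrArg Subtype.val (hfix ⟨r • a, hpr a⟩)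
  · intro h
    apply hr
    rw [← hb]
    exact addOrderOf_dvd_of_nsmul_eq_zero h

namespace CycleSet

variable {X : Type*}

theorem pretransitive (C : CycleSet X) (hind : C.Indecomposable) :
    MulAction.IsPretransitive C.permGroup X where
  exists_smul_eq x y := by
    obtain ⟨g, hg, h⟩ := hind x y
    exact ⟨⟨g, hg⟩, h⟩

/-- The degree modulo `p` is well defined for indecomposable cycle sets of prime size `p`. -/
theorem deg_prime [Finite X] (C : CycleSet X) {p r : ℕ} (hp : p.Prime) (hcard : Nat.card X = p)
    (hG : Nat.card C.permGroup = p * r) (hr : ¬ p ∣ r)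
    {m n : Multiset X} (h : C.F m = C.F n) : (m.card : ZMod p) = n.card := by
  classical
  have := Fact.mk hp
  have := Fintype.ofFinite X
  let _ := C.conGroup
  obtain ⟨e⟩ := C.con_card
  have : Finite C.con.Quotient := Finite.of_equiv _ e.symm
  have hA : Nat.card C.con.Quotient = p * r := by rw [Nat.card_congr e, hG]
  obtain ⟨τ, hτ⟩ := exists_prime_orderOf_dvd_card' (G := C.permGroup) p
    (by rw [hG]; exact dvd_mul_right _ _)
  obtain ⟨t, ht⟩ := C.exists_F τ.2
  have hτ' : orderOf (C.F t) = p := by rw [ht, Subgroup.orderOf_coe, hτ]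
  have hXp : Fintype.card X = p := by rw [← Nat.card_eq_fintype_card, hcard]
  have hcyc : (C.F t).IsCycle := Equiv.Perm.isCycle_of_prime_order'' (by rwa [hXp]) (by rw [hτ', hXp])
  have hsupp : (C.F t).support = Finset.univ := by
    rw [← Finset.card_eq_iff_eq_univ, ← hcyc.orderOf, hτ', hXp]
  have hmove : ∀ x, C.F t x ≠ x := fun x => by
    rw [← Equiv.Perm.mem_support, hsupp]; exact Finset.mem_univ x
  obtain ⟨h1, h2, b, hb⟩ := torsion_fix hp hA hr (C.conMap t) (by
    intro a
    induction a using AddCon.induction_on with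
    | H m =>
      rw [conMap_iter, ← hτ', pow_orderOf_eq_one]
      simp)
  obtain ⟨x0⟩ : Nonempty X := (Nat.card_pos_iff.1 (hcard ▸ hp.pos)).1
  let c : C.con.Quotient := r • ((({x0} : Multiset X)) : C.con.Quotient)
  have hc : ∀ x, r • ((({x} : Multiset X)) : C.con.Quotient) = c := by
    intro x
    obtain ⟨i, rfl⟩ := hcyc.exists_pow_eq (hmove x0) (hmove x)
    induction i with
    | zero => rfl
    | succ i ih =>
      have h3 := h1 (((({((C.F t) ^ i) x0} : Multiset X)) : C.con.Quotient))
      rw [map_nsmul, conMap_coe, Multiset.map_singleton] at h3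
      rw [← ih, ← h3, pow_succ']
      rfl
  have hm : ∀ m : Multiset X, r • (m : C.con.Quotient) = m.card • c := by
    intro m
    induction m using Multiset.induction with
    | empty => rw [AddCon.coe_zero]; simp
    | cons x m ih =>
      rw [← Multiset.singleton_add, AddCon.coe_add, nsmul_add, ih, hc, Multiset.card_add,
        Multiset.card_singleton, add_nsmul, one_nsmul]
  have hc0 : c ≠ 0 := by
    intro h0
    apply hb
    induction b using AddCon.induction_on with
    | H m => rw [hm, h0, nsmul_zero]
  have hco : addOrderOf c = p := addOrderOf_eq_prime (h2 _) hc0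
  have h3 : m.card • c = n.card • c := by
    rw [← hm, ← hm, (C.con_eq m n).2 h]
  rw [ZMod.natCast_eq_natCast_iff, ← hco]
  exact nsmul_eq_nsmul_iff_modEq.1 h3

theorem prime_const (C : CycleSet X) {p : ℕ} (hp : p.Prime) (hcard : Nat.card X = p)
    (hind : C.Indecomposable) (x y : X) : C.op x = C.op y := by
  classical
  have := Fact.mk hp
  have : Finite X := (Nat.card_pos_iff.1 (hcard ▸ hp.pos)).2
  have := Fintype.ofFinite X
  have hpt := C.pretransitive hind
  have hpG : p ∣ Nat.card C.permGroup := by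
    rw [← hcard, ← MulAction.index_stabilizer_of_transitive C.permGroup x]
    exact Subgroup.index_dvd_card _
  obtain ⟨r, hG⟩ := hpG
  have hr : ¬ p ∣ r := by
    intro hr
    have h1 : Nat.card C.permGroup ∣ p.factorial := by
      have := Subgroup.card_subgroup_dvd_card C.permGroup
      rwa [Nat.card_perm, hcard] at this
    rw [hG, ← Nat.mul_factorial_pred hp.ne_zero] at h1
    have h2 := hr.trans (Nat.dvd_of_mul_dvd_mul_left hp.pos h1)
    rw [hp.dvd_factorial] at h2
    have := hp.pos
    omega
  have hex : ∀ g : C.permGroup, ∃ m, C.F m = g.1 := fun g => C.exists_F g.2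
  choose M hM using hex
  have hd : ∀ m (g : C.permGroup), C.F m = g.1 → ((M g).card : ZMod p) = m.card := fun m g h =>
    C.deg_prime hp hcard hG hr ((hM g).trans h.symm)
  let d : C.permGroup →* Multiplicative (ZMod p) := MonoidHom.mk'
    (fun g => Multiplicative.ofAdd ((M g).card : ZMod p)) (by
      intro a b
      rw [← ofAdd_add]
      congr 1
      rw [hd _ (a * b) (by rw [Subgroup.coe_mul, ← hM a, ← hM b, F_mul])]
      simp)
  have hσ : ∀ x, d ⟨C.sigma x, Subgroup.subset_closure ⟨x, rfl⟩⟩ = Multiplicative.ofAdd 1 := by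
    intro x
    change Multiplicative.ofAdd _ = _
    rw [hd {x} _ (C.F_singleton x)]
    simp
  have hsurj : Function.Surjective d := by
    intro k
    refine ⟨⟨C.sigma x, Subgroup.subset_closure ⟨x, rfl⟩⟩ ^ (Multiplicative.toAdd k).val, ?_⟩
    rw [map_pow, hσ, ← ofAdd_nsmul]
    simp
  have hN : Nat.card d.ker = r := by
    have h1 := d.ker.card_mul_index
    rw [Subgroup.index_ker, MonoidHom.range_eq_top.2 hsurj, hG] at h1
    simp only [Subgroup.card_top] at h1
    rw [show Nat.card (Multiplicative (ZMod p)) = p from Nat.card_zmod p, mul_comm] at h1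
    exact Nat.eq_of_mul_eq_mul_left hp.pos h1
  have hprim : MulAction.IsPreprimitive C.permGroup X :=
    MulAction.IsPreprimitive.of_prime_card (by rwa [hcard])
  have hfix : MulAction.fixedPoints d.ker X = .univ := by
    by_contra hne
    have := MulAction.IsQuasiPreprimitive.isPretransitive_of_normal hne
    apply hr
    have h1 := Subgroup.index_dvd_card (MulAction.stabilizer d.ker x)
    rwa [hN, MulAction.index_stabilizer_of_transitive, hcard] at h1
  let sx : C.permGroup := ⟨C.sigma x, Subgroup.subset_closure ⟨x, rfl⟩⟩
  let sy : C.permGroup := ⟨C.sigma y, Subgroup.subset_closure ⟨y, rfl⟩⟩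
  have hk : sx * sy⁻¹ ∈ d.ker := by
    rw [MonoidHom.mem_ker, map_mul, map_inv, hσ, hσ, mul_inv_cancel]
  funext z
  have h1 : C.sigma y z ∈ MulAction.fixedPoints d.ker X := by rw [hfix]; trivial
  have h2 := h1 ⟨_, hk⟩
  change (C.sigma x) ((C.sigma y)⁻¹ (C.sigma y z)) = C.sigma y z at h2
  rw [show (C.sigma y)⁻¹ (C.sigma y z) = z from (C.sigma y).symm_apply_apply z] at h2
  exact h2

end CycleSet

/-- A single permutation generating a transitive group is a shift. -/
theorem exists_shift {Y : Type*} {n : ℕ} [NeZero n] (hcard : Nat.card Y = n) (s : Equiv.Perm Y)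
    (ht : ∀ x y, ∃ g ∈ Subgroup.zpowers s, g x = y) :
    ∃ e : ZMod n ≃ Y, ∀ k, e (k + 1) = s (e k) := by
  classical
  have hn : 0 < n := Nat.pos_of_ne_zero (NeZero.ne n)
  obtain ⟨⟨y0⟩, hfin⟩ := Nat.card_pos_iff.1 (hcard ▸ hn)
  have hpt : MulAction.IsPretransitive (Subgroup.zpowers s) Y := ⟨fun x y => by
    obtain ⟨g, hg, h⟩ := ht x y
    exact ⟨⟨g, hg⟩, h⟩⟩
  have hfree : ∀ i : ℕ, ∀ x, (s ^ i) x = x → s ^ i = 1 := by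
    intro i x hx
    ext y
    obtain ⟨g, ⟨k, rfl⟩, rfl⟩ := ht x y
    change (s ^ i * s ^ k) x = (s ^ k) x
    rw [(Commute.refl s).pow_left i |>.zpow_right k |>.eq, Equiv.Perm.mul_apply, hx]
  have hord : orderOf s = n := by
    rw [← Nat.card_zpowers, ← hcard, ← MulAction.index_stabilizer_of_transitive (Subgroup.zpowers s) y0]
    have : MulAction.stabilizer (Subgroup.zpowers s) y0 = ⊥ := by
      rw [eq_bot_iff]
      rintro ⟨g, hg⟩ h
      obtain ⟨i, rfl⟩ := (mem_powers_iff_mem_zpowers).2 hg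
      exact Subtype.ext (hfree i y0 h)
    rw [this, Subgroup.index_bot]
  let f : ZMod n → Y := fun k => (s ^ k.val) y0
  have hf : Function.Surjective f := by
    intro y
    obtain ⟨g, hg, rfl⟩ := ht y0 y
    obtain ⟨i, rfl⟩ := (mem_powers_iff_mem_zpowers).2 hg
    refine ⟨(i : ZMod n), ?_⟩
    change (s ^ (i : ZMod n).val) y0 = (s ^ i) y0
    rw [ZMod.val_natCast, ← hord, pow_mod_orderOf]
  have hb : Function.Bijective f :=
    (Nat.bijective_iff_surjective_and_card f).2 ⟨hf, by rw [hcard, Nat.card_zmod]⟩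
  refine ⟨Equiv.ofBijective f hb, fun k => ?_⟩
  change (s ^ (k + 1).val) y0 = s ((s ^ k.val) y0)
  rw [← Equiv.Perm.mul_apply, ← pow_succ']
  congr 1
  rw [pow_eq_pow_iff_modEq, hord, ← ZMod.natCast_eq_natCast_iff]
  simp

theorem card_fiber {X Y : Type*} [Finite X] (π : X → Y) (hs : Function.Surjective π)
    (h : ∀ x x', ∃ g : Equiv.Perm X, g x = x' ∧ ∀ u v, π u = π v ↔ π (g u) = π (g v)) (x0 : X) :
    Nat.card X = Nat.card Y * Nat.card {u // π u = π x0} := by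
  classical
  have : Finite Y := Finite.of_surjective π hs
  have := Fintype.ofFinite Y
  rw [← Nat.card_congr (Equiv.sigmaFiberEquiv π), Nat.card_sigma]
  have h1 : ∀ y, Nat.card {u // π u = y} = Nat.card {u // π u = π x0} := by
    intro y
    obtain ⟨x, rfl⟩ := hs y
    obtain ⟨g, hg, hg'⟩ := h x x0
    refine Nat.card_congr (g.subtypeEquiv fun a => ?_)
    rw [hg', hg]
  simp [h1]

namespace CycleSet

variable {X : Type*}

/-- A cycle set all of whose permutations coincide, indecomposable, is a cyclic shift. -/
theorem const_shift (C : CycleSet X) {n : ℕ} [NeZero n] (hcard : Nat.card X = n)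
    (hind : C.Indecomposable) (hc : ∀ x y, C.op x = C.op y) :
    ∃ e : ZMod n ≃ X, ∀ k x, e (k + 1) = C.op x (e k) := by
  have hn : 0 < n := Nat.pos_of_ne_zero (NeZero.ne n)
  obtain ⟨⟨y0⟩, hfin⟩ := Nat.card_pos_iff.1 (hcard ▸ hn)
  have h1 : C.permGroup = Subgroup.zpowers (C.sigma y0) := by
    rw [Subgroup.zpowers_eq_closure, permGroup]
    congr 1
    ext g
    constructor
    · rintro ⟨y, rfl⟩
      ext z
      exact congrFun (hc y y0) z
    · rintro rfl
      exact ⟨y0, rfl⟩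
  obtain ⟨e, he⟩ := exists_shift hcard (C.sigma y0) (by
    intro x y
    rw [← h1]
    exact hind x y)
  refine ⟨e, fun k x => ?_⟩
  rw [he, hc x y0]
  rfl

/-- The retraction equivalence relation. -/
def retrSetoid (C : CycleSet X) : Setoid X where
  r x y := C.op x = C.op y
  iseqv := ⟨fun _ => rfl, fun h => h.symm, fun h h' => h.trans h'⟩

theorem retr_compat (C : CycleSet X) {x x' y y' : X} (h : C.op x = C.op x')
    (h' : C.op y = C.op y') : C.op (C.op x y) = C.op (C.op x' y') := by
  rw [h]
  funext z
  obtain ⟨w, rfl⟩ := (C.c2 x').2 z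
  have key : C.op (C.op y x') (C.op y w) = C.op (C.op y' x') (C.op y' w) := by rw [h']
  rw [C.c1, C.c1 x' y', key]

/-- The retraction of a finite cycle set. -/
def retr [Finite X] (C : CycleSet X) : CycleSet (Quotient C.retrSetoid) where
  op := Quotient.map₂ C.op (fun _ _ h _ _ h' => C.retr_compat h h')
  c1 := by
    rintro ⟨x⟩ ⟨y⟩ ⟨z⟩
    exact congrArg (Quotient.mk C.retrSetoid) (C.c1 x y z)
  c2 := by
    rintro ⟨x⟩
    rw [← Finite.surjective_iff_bijective]
    rintro ⟨z⟩
    obtain ⟨w, hw⟩ := (C.c2 x).2 z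
    exact ⟨Quotient.mk C.retrSetoid w, congrArg (Quotient.mk C.retrSetoid) hw⟩
  c3 := by
    rw [← Finite.surjective_iff_bijective]
    rintro ⟨z⟩
    obtain ⟨w, hw⟩ := C.c3.2 z
    exact ⟨Quotient.mk C.retrSetoid w, congrArg (Quotient.mk C.retrSetoid) hw⟩

theorem retr_op [Finite X] (C : CycleSet X) (x y : X) :
    C.retr.op (Quotient.mk _ x) (Quotient.mk _ y) = Quotient.mk C.retrSetoid (C.op x y) := rfl

theorem retr_F [Finite X] (C : CycleSet X) (m : Multiset X) (x : X) :
    C.retr.F (m.map (Quotient.mk C.retrSetoid)) (Quotient.mk _ x) =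
      Quotient.mk C.retrSetoid (C.F m x) := by
  induction m using Multiset.induction generalizing x with
  | empty => simp
  | cons a m ih =>
    rw [Multiset.map_cons, F_cons, F_cons, Equiv.Perm.mul_apply, Equiv.Perm.mul_apply, ih, ih]
    rfl

theorem retr_ind [Finite X] (C : CycleSet X) (hind : C.Indecomposable) :
    C.retr.Indecomposable := by
  rintro ⟨x⟩ ⟨y⟩
  obtain ⟨g, hg, rfl⟩ := hind x y
  obtain ⟨m, rfl⟩ := C.exists_F hg
  exact ⟨_, C.retr.F_mem _, C.retr_F m x⟩

theorem retr_cases (C : CycleSet X) {p : ℕ} (hp : p.Prime) (hcard : Nat.card X = p ^ 2)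
    (hind : C.Indecomposable) (hretr : ∃ x y : X, x ≠ y ∧ C.op x = C.op y) :
    (∀ x y, C.op x = C.op y) ∨
    ∃ π : X → ZMod p, Function.Surjective π ∧ (∀ x y, π x = π y ↔ C.op x = C.op y) ∧
      ∀ x y, π (C.op x y) = π y + 1 := by
  have := Fact.mk hp
  have : Finite X := (Nat.card_pos_iff.1 (hcard ▸ pow_pos hp.pos 2)).2
  obtain ⟨x0, y0, hne, h0⟩ := hretr
  let q : X → Quotient C.retrSetoid := Quotient.mk _
  have hq : Function.Surjective q := Quotient.mk_surjective
  have hqe : ∀ x y, q x = q y ↔ C.op x = C.op y := fun x y => Quotient.eq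
  have hc := card_fiber q hq (by
    intro x x'
    obtain ⟨g, hg, h⟩ := hind x x'
    obtain ⟨m, rfl⟩ := C.exists_F hg
    refine ⟨_, h, fun u v => ?_⟩
    change _ ↔ Quotient.mk _ _ = Quotient.mk _ _
    rw [← C.retr_F, ← C.retr_F]
    exact (Equiv.apply_eq_iff_eq _).symm) x0
  have hd : Nat.card (Quotient C.retrSetoid) ∣ p ^ 2 := by
    rw [← hcard, hc]; exact dvd_mul_right _ _
  obtain ⟨k, hk, hk'⟩ := (Nat.dvd_prime_pow hp).1 hd
  have hkcases : k = 0 ∨ k = 1 ∨ k = 2 := by omega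
  rcases hkcases with rfl | rfl | rfl
  · left
    intro x y
    have : Subsingleton (Quotient C.retrSetoid) :=
      (Nat.card_eq_one_iff_unique.1 (by simpa using hk')).1
    exact (hqe x y).1 (Subsingleton.elim _ _)
  · right
    rw [pow_one] at hk'
    have hind' := C.retr_ind hind
    obtain ⟨e, he⟩ := C.retr.const_shift hk' hind' (C.retr.prime_const hp hk' hind')
    refine ⟨fun x => e.symm (q x), e.symm.surjective.comp hq, fun x y => ?_, fun x y => ?_⟩
    · rw [← hqe]; exact e.symm.apply_eq_iff_eq
    · rw [Equiv.symm_apply_eq, he _ (q x), e.apply_symm_apply]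
      rfl
  · exfalso
    have hb : Function.Bijective q :=
      (Nat.bijective_iff_surjective_and_card q).2 ⟨hq, by rw [hcard, hk']⟩
    exact hne (hb.1 ((hqe _ _).2 h0))

/-- Existence of a central element acting freely along the fibres. -/
theorem exists_central (C : CycleSet X) {p : ℕ} (hp : p.Prime) (hcard : Nat.card X = p ^ 2)
    (hind : C.Indecomposable) (π : X → ZMod p) (hs : Function.Surjective π)
    (hπ : ∀ x y, π x = π y → C.op x = C.op y) (hπ1 : ∀ x y, π (C.op x y) = π y + 1) :
    ∃ w : Equiv.Perm X, orderOf w = p ∧ (∀ x, π (w x) = π x) ∧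
      (∀ x y, w (C.op x y) = C.op x (w y)) ∧ ∀ (i : ℕ) (x : X), (w ^ i) x = x → w ^ i = 1 := by
  classical
  have := Fact.mk hp
  have : Finite X := (Nat.card_pos_iff.1 (hcard ▸ pow_pos hp.pos 2)).2
  have hpt := C.pretransitive hind
  have hσ : ∀ x y, π x = π y → C.sigma x = C.sigma y := by
    intro x y h
    ext z
    exact congrFun (hπ x y h) z
  have hF : ∀ m x, π (C.F m x) = π x + m.card := by
    intro m
    induction m using Multiset.induction with
    | empty => simp
    | cons a m ih =>
      intro x
      rw [F_cons, Equiv.Perm.mul_apply, sigma_apply, hπ1, ih, Multiset.card_cons]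
      push_cast
      ring
  have hG : ∀ g : C.permGroup, ∃ k : ZMod p, ∀ x, π (g.1 x) = π x + k := by
    intro g
    obtain ⟨m, hm⟩ := C.exists_F g.2
    exact ⟨m.card, fun x => by rw [← hm, hF]⟩
  have hmap : ∀ h : Equiv.Perm X, (∀ x, π (h x) = π x) → ∀ m, C.F (m.map h) = C.F m := by
    intro h hh m
    induction m using Multiset.induction with
    | empty => simp
    | cons a m ih =>
      rw [Multiset.map_cons, F_cons, F_cons, ih, hσ (C.F m (h a)) (C.F m a)]
      rw [hF, hF, hh]
  let N : Subgroup C.permGroup :=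
    { carrier := {g | ∀ x, π (g.1 x) = π x}
      one_mem' := fun x => rfl
      mul_mem' := by
        intro a b ha hb x
        change π (a.1 (b.1 x)) = π x
        rw [ha, hb]
      inv_mem' := by
        intro a ha x
        have h1 := ha ((a⁻¹).1 x)
        rw [← h1]
        congr 1
        exact a.1.apply_symm_apply x }
  have hNmem : ∀ g : C.permGroup, g ∈ N ↔ ∀ x, π (g.1 x) = π x := fun g => Iff.rfl
  have hNn : N.Normal := ⟨by
    intro n hn g x
    obtain ⟨k, hk⟩ := hG g
    change π (g.1 (n.1 ((g⁻¹).1 x))) = π x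
    rw [hk, (hNmem n).1 hn, ← hk]
    congr 1
    exact g.1.apply_symm_apply x⟩
  have hNcomm : ∀ a ∈ N, ∀ b ∈ N, a * b = b * a := by
    intro a ha b hb
    obtain ⟨m, hm⟩ := C.exists_F a.2
    obtain ⟨n, hn⟩ := C.exists_F b.2
    apply Subtype.ext
    rw [Subgroup.coe_mul, Subgroup.coe_mul]
    have h1 := C.F_add m n
    have h2 := C.F_add n m
    rw [hmap _ (by rw [hn]; exact hb)] at h1
    rw [hmap _ (by rw [hm]; exact ha)] at h2
    rw [← hm, ← hn, ← h1, ← h2, add_comm]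
  have hcg : ∀ x, Nat.card {u // π u = π x} = p := by
    intro x
    have h1 := card_fiber π hs (by
      intro x x'
      obtain ⟨g, hg, h⟩ := hind x x'
      obtain ⟨k, hk⟩ := hG ⟨g, hg⟩
      refine ⟨g, h, fun u v => ?_⟩
      have h1 := hk u
      have h2 := hk v
      simp only at h1 h2
      rw [h1, h2, add_left_inj]) x
    rw [hcard, Nat.card_zmod, sq] at h1
    exact (Nat.eq_of_mul_eq_mul_left hp.pos h1).symm
  have horb : ∀ x : X, (MulAction.stabilizer N x).index = p := by
    intro x
    rw [MulAction.index_stabilizer, ← hcg x]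
    have : MulAction.orbit N x = {u | π u = π x} := by
      ext u
      constructor
      · rintro ⟨n, rfl⟩
        exact n.2 x
      · intro hu
        obtain ⟨g, hg, h⟩ := hind x u
        obtain ⟨k, hk⟩ := hG ⟨g, hg⟩
        have h1 := hk x
        simp only [h] at h1
        rw [show π u = π x from hu] at h1
        have hk0 : k = 0 := by simpa using h1
        refine ⟨⟨⟨g, hg⟩, fun y => ?_⟩, h⟩
        rw [hk y, hk0, add_zero]
    rw [this]
    rfl
  let _ : CommGroup N := { (inferInstance : Group N) with
    mul_comm := fun a b => Subtype.ext (hNcomm a.1 a.2 b.1 b.2) }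
  have hNp : ∀ n ∈ N, n ^ p = 1 := by
    intro n hn
    apply Subtype.ext
    ext x
    have h1 := (MulAction.stabilizer N x).pow_index_mem (⟨n, hn⟩ : N)
    rw [horb] at h1
    exact h1
  have hpG : IsPGroup p C.permGroup := by
    intro g
    refine ⟨2, ?_⟩
    rw [sq, pow_mul]
    apply hNp
    obtain ⟨k, hk⟩ := hG g
    have : ∀ (i : ℕ) x, π ((g ^ i).1 x) = π x + i * k := by
      intro i
      induction i with
      | zero => simp
      | succ i ih =>
        intro x
        rw [pow_succ']
        change π (g.1 ((g ^ i).1 x)) = _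
        rw [hk, ih]
        push_cast
        ring
    intro x
    rw [this]
    simp
  obtain ⟨x0, -⟩ := hs 0
  have hpN : p ∣ Nat.card N := by
    rw [← horb x0]; exact Subgroup.index_dvd_card _
  have hpC : IsPGroup p (ConjAct C.permGroup) := hpG.of_equiv ConjAct.toConjAct
  obtain ⟨z, hz, hz1⟩ := hpC.exists_fixed_point_of_prime_dvd_card_of_fixed_point N hpN (a := 1)
    (by intro g; exact smul_one g)
  have hzc : ∀ g : C.permGroup, g * z.1 = z.1 * g := by
    intro g
    have h1 := congrArg Subtype.val (hz (ConjAct.toConjAct g))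
    rw [ConjAct.Subgroup.val_conj_smul, ConjAct.toConjAct_smul] at h1
    rw [← mul_inv_eq_iff_eq_mul, h1]
  let w : Equiv.Perm X := z.1.1
  have hwc : ∀ g ∈ C.permGroup, g * w = w * g := fun g hg =>
    congrArg Subtype.val (hzc ⟨g, hg⟩)
  refine ⟨w, ?_, z.2, ?_, ?_⟩
  · apply orderOf_eq_prime
    · exact congrArg Subtype.val (hNp z.1 z.2)
    · intro h
      apply hz1
      symm
      exact Subtype.ext (Subtype.ext h)
  · intro x y
    have := hwc (C.sigma x) (Subgroup.subset_closure ⟨x, rfl⟩)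
    exact (DFunLike.congr_fun this y).symm
  · intro i x hx
    ext y
    obtain ⟨g, hg, rfl⟩ := hind x y
    have h1 : Commute g (w ^ i) := Commute.pow_right (hwc g hg) i
    have h2 := DFunLike.congr_fun h1.eq x
    simp only [Equiv.Perm.mul_apply, hx] at h2
    exact h2.symm

end CycleSet

theorem zmod_step {p : ℕ} [NeZero p] {φ : ZMod p → ZMod p} {d e : ZMod p}
    (h : ∀ c, φ (c + d) = φ c + e) (c k : ZMod p) : φ (c + k * d) = φ c + k * e := by
  have h1 : ∀ n : ℕ, φ (c + n * d) = φ c + n * e := by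
    intro n
    induction n with
    | zero => simp
    | succ n ih =>
      rw [show c + ((n + 1 : ℕ) : ZMod p) * d = (c + n * d) + d by push_cast; ring, h, ih]
      push_cast
      ring
  have h2 := h1 k.val
  rwa [ZMod.natCast_zmod_val] at h2

/-- The cycle set of type (2). -/
def mkD {p : ℕ} [NeZero p] (Φ : ZMod p → ZMod p) (S : ZMod p) : CycleSet (ZMod p × ZMod p) where
  op u v := (v.1 + 1, v.2 + (if v.1 = 0 then S else 0) + Φ (v.1 - u.1))
  c1 := by
    rintro ⟨a, x⟩ ⟨b, y⟩ ⟨c, z⟩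
    ext
    · rfl
    · simp only [add_sub_add_right_eq_sub]
      ring
  c2 := by
    rintro ⟨a, x⟩
    rw [← Finite.injective_iff_bijective]
    rintro ⟨b, y⟩ ⟨c, z⟩ h
    simp only [Prod.mk.injEq, add_left_inj] at h
    obtain ⟨rfl, h⟩ := h
    simpa using h
  c3 := by
    rw [← Finite.injective_iff_bijective]
    rintro ⟨b, y⟩ ⟨c, z⟩ h
    simp only [Prod.mk.injEq, add_left_inj] at h
    obtain ⟨rfl, h⟩ := h
    simpa using h

/-- The cycle set of type (1). -/
def mkShift (n : ℕ) : CycleSet (ZMod n) where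
  op _ y := y + 1
  c1 := fun _ _ _ => rfl
  c2 := fun _ => (Equiv.addRight (1 : ZMod n)).bijective
  c3 := (Equiv.addRight (1 : ZMod n)).bijective

theorem CycleSet.type_two {X : Type*} (C : CycleSet X) {p : ℕ} (hp : p.Prime)
    (hcard : Nat.card X = p ^ 2) (π : X → ZMod p) (hs : Function.Surjective π)
    (hπ : ∀ x y, π x = π y ↔ C.op x = C.op y) (hπ1 : ∀ x y, π (C.op x y) = π y + 1)
    (w : Equiv.Perm X) (hw : orderOf w = p) (hwπ : ∀ x, π (w x) = π x)
    (hwop : ∀ x y, w (C.op x y) = C.op x (w y))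
    (hwfree : ∀ (i : ℕ) (x : X), (w ^ i) x = x → w ^ i = 1) :
    ∃ (Φ : ZMod p → ZMod p) (S : ZMod p), (∃ i j : ZMod p, Φ i ≠ Φ j) ∧ Φ 0 = 0 ∧
        ∃ D : CycleSet (ZMod p × ZMod p),
          (∀ a b x y : ZMod p,
            D.op (a, x) (b, y) = (b + 1, y + (if b = 0 then S else 0) + Φ (b - a))) ∧
          C.Iso D := by
  classical
  have := Fact.mk hp
  have : Finite X := (Nat.card_pos_iff.1 (hcard ▸ pow_pos hp.pos 2)).2
  have hpow : ∀ (i : ℕ) x, π ((w ^ i) x) = π x := by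
    intro i
    induction i with
    | zero => simp
    | succ i ih => intro x; rw [pow_succ', Equiv.Perm.mul_apply, hwπ, ih]
  have hpowop : ∀ (i : ℕ) x y, (w ^ i) (C.op x y) = C.op x ((w ^ i) y) := by
    intro i
    induction i with
    | zero => simp
    | succ i ih =>
      intro x y
      rw [pow_succ', Equiv.Perm.mul_apply, Equiv.Perm.mul_apply, ih, hwop]
  obtain ⟨E, hE⟩ : ∃ E : ZMod p → X → X, ∀ y x, E y x = (w ^ y.val) x := ⟨_, fun _ _ => rfl⟩
  have hE0 : ∀ x, E 0 x = x := by intro x; simp [hE]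
  have hEadd : ∀ y y' x, E y (E y' x) = E (y + y') x := by
    intro y y' x
    rw [hE, hE, hE, ← Equiv.Perm.mul_apply, ← pow_add]
    congr 1
    rw [pow_eq_pow_iff_modEq, hw, ← ZMod.natCast_eq_natCast_iff]
    simp
  have hEfree : ∀ y x, E y x = x → y = 0 := by
    intro y x h
    rw [hE] at h
    have h1 := orderOf_dvd_of_pow_eq_one (hwfree _ _ h)
    rw [hw, ← ZMod.natCast_eq_zero_iff] at h1
    simpa using h1
  have hEinj : ∀ y y' x, E y x = E y' x → y = y' := by
    intro y y' x h
    have h1 : E (-y') (E y x) = x := by rw [h, hEadd, neg_add_cancel, hE0]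
    rw [hEadd] at h1
    have := hEfree _ _ h1
    rwa [neg_add_eq_zero, eq_comm] at this
  have hEπ : ∀ y x, π (E y x) = π x := fun y x => by rw [hE, hpow]
  have hEop : ∀ y u v, C.op u (E y v) = E y (C.op u v) := fun y u v => by rw [hE, hE, hpowop]
  have hop : ∀ u v, π u = π v → C.op u = C.op v := fun u v h => (hπ u v).1 h
  obtain ⟨x1, hx1⟩ := hs 1
  obtain ⟨T, hT⟩ : ∃ T : X → X, ∀ x, T x = C.op x x := ⟨_, fun _ => rfl⟩
  have hTπ : ∀ (i : ℕ) x, π (T^[i] x) = π x + i := by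
    intro i
    induction i with
    | zero => simp
    | succ i ih =>
      intro x
      rw [Function.iterate_succ_apply', hT, hπ1, ih]
      push_cast
      ring
  obtain ⟨X0, hX0⟩ : ∃ X0 : ZMod p → X, ∀ b, X0 b = T^[(b - 1).val] x1 := ⟨_, fun _ => rfl⟩
  have hX0π : ∀ b, π (X0 b) = b := by
    intro b
    rw [hX0, hTπ, hx1]
    simp
  have hX0T : ∀ b, b ≠ 0 → T (X0 b) = X0 (b + 1) := by
    intro b hb
    have h1 : (b + 1 - 1).val = (b - 1).val + 1 := by
      have h2 : ((b - 1) + 1).val = (b - 1).val + 1 := by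
        have hv : (1 : ZMod p).val = 1 := ZMod.val_one p
        rw [ZMod.val_add_of_lt, hv]
        rw [hv]
        have h3 := ZMod.val_lt (b - 1)
        by_contra h4
        apply hb
        have h5 : (b - 1).val + 1 = p := by omega
        have h6 : (((b - 1).val + 1 : ℕ) : ZMod p) = 0 := by rw [h5]; simp
        simpa using h6
      rw [← h2]
      congr 1
      ring
    rw [hX0, hX0, h1, Function.iterate_succ_apply']
  have hbij : Function.Bijective (fun u : ZMod p × ZMod p => E u.2 (X0 u.1)) := by
    rw [Nat.bijective_iff_injective_and_card]
    constructor
    · rintro ⟨b, y⟩ ⟨b', y'⟩ h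
      simp only at h
      have h1 := congrArg π h
      rw [hEπ, hEπ, hX0π, hX0π] at h1
      subst h1
      rw [hEinj _ _ _ h]
    · rw [Nat.card_prod, Nat.card_zmod, hcard, sq]
  have hex : ∀ u b, π u = b → ∃ y, u = E y (X0 b) := by
    intro u b h
    obtain ⟨⟨b', y⟩, rfl⟩ := hbij.2 u
    simp only [hEπ, hX0π] at h
    subst h
    exact ⟨y, rfl⟩
  obtain ⟨S, hS⟩ := hex (T (X0 0)) (0 + 1) (by rw [hT, hπ1, hX0π])
  have hTX : ∀ b, T (X0 b) = E (if b = 0 then S else 0) (X0 (b + 1)) := by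
    intro b
    split_ifs with hb
    · rw [hb, hS]
    · rw [hX0T b hb, hE0]
  have hΦex : ∀ a b, ∃ y, C.op (X0 a) (X0 b) = E y (T (X0 b)) := by
    intro a b
    obtain ⟨y, hy⟩ := hex (C.op (X0 a) (X0 b)) (b + 1) (by rw [hπ1, hX0π])
    refine ⟨y - (if b = 0 then S else 0), ?_⟩
    rw [hy, hTX, hEadd, sub_add_cancel]
  choose Φ hΦ using hΦex
  have hΦd : ∀ c, Φ c c = 0 := by
    intro c
    have h1 := hΦ c c
    rw [← hT] at h1
    exact hEfree _ _ h1.symm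
  have hcomp : ∀ a b c, C.op (C.op (X0 a) (X0 b)) (C.op (X0 a) (X0 c)) =
      E (Φ a c + (if c = 0 then S else 0) + Φ (b + 1) (c + 1)) (T (X0 (c + 1))) := by
    intro a b c
    rw [hop (C.op (X0 a) (X0 b)) (X0 (b + 1)) (by rw [hπ1, hX0π, hX0π]), hΦ a c, hTX, hEadd, hEop,
      hΦ, hEadd]
  have hΦ1 : ∀ b c, Φ (b + 1) (c + 1) = Φ b c := by
    intro b c
    have h1 := C.c1 (X0 c) (X0 b) (X0 c)
    rw [hcomp, hcomp] at h1
    have h2 := hEinj _ _ _ h1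
    rw [hΦd, hΦd] at h2
    linear_combination h2
  have hΦk : ∀ (k : ℕ) b c, Φ (b + k) (c + k) = Φ b c := by
    intro k
    induction k with
    | zero => simp
    | succ k ih =>
      intro b c
      push_cast
      rw [← add_assoc, ← add_assoc, hΦ1, ih]
  have hΦ0 : ∀ a b, Φ a b = Φ 0 (b - a) := by
    intro a b
    have := hΦk a.val 0 (b - a)
    rw [ZMod.natCast_zmod_val] at this
    simpa using this
  have hmain : ∀ a b x y, C.op (E x (X0 a)) (E y (X0 b)) =
      E (y + (if b = 0 then S else 0) + Φ 0 (b - a)) (X0 (b + 1)) := by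
    intro a b x y
    rw [hop (E x (X0 a)) (X0 a) (hEπ _ _), hEop, hΦ, hTX, hEadd, hEadd, hΦ0]
    congr 1
    ring
  refine ⟨Φ 0, S, ?_, hΦd 0, mkD (Φ 0) S, fun _ _ _ _ => rfl, ?_⟩
  · by_contra! hcon
    have h1 : C.op (X0 0) = C.op (X0 1) := by
      funext u
      obtain ⟨⟨b, y⟩, rfl⟩ := hbij.2 u
      simp only
      rw [hEop, hEop, hΦ, hΦ, hΦ0 0, hΦ0 1, hcon (b - 0) (b - 1)]
    have h2 := (hπ _ _).2 h1
    rw [hX0π, hX0π] at h2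
    exact zero_ne_one h2
  · let e := Equiv.ofBijective _ hbij
    refine ⟨e.symm, e.symm.bijective, fun u v => ?_⟩
    obtain ⟨⟨a, x⟩, rfl⟩ := e.surjective u
    obtain ⟨⟨b, y⟩, rfl⟩ := e.surjective v
    rw [e.symm_apply_apply, e.symm_apply_apply, Equiv.symm_apply_eq]
    exact hmain a b x y

theorem iso_two {p : ℕ} (hp : p.Prime) (Φ Φ' : ZMod p → ZMod p) (S S' : ZMod p)
    (hn : ∃ i j : ZMod p, Φ i ≠ Φ j) (h0 : Φ 0 = 0)
    (hn' : ∃ i j : ZMod p, Φ' i ≠ Φ' j) (h0' : Φ' 0 = 0)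
    (D D' : CycleSet (ZMod p × ZMod p))
    (hD : ∀ a b x y : ZMod p,
          D.op (a, x) (b, y) = (b + 1, y + (if b = 0 then S else 0) + Φ (b - a)))
    (hD' : ∀ a b x y : ZMod p,
          D'.op (a, x) (b, y) = (b + 1, y + (if b = 0 then S' else 0) + Φ' (b - a))) :
    D.Iso D' ↔ ∃ α : ZMod p, α ≠ 0 ∧ S' = α * S ∧ ∀ i : ZMod p, Φ' i = α * Φ i := by
  have := Fact.mk hp
  constructor
  · rintro ⟨f, hf, hfop⟩
    have hfst : ∀ a x x', (f (a, x)).1 = (f (a, x')).1 := by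
      intro a x x'
      by_contra hne
      have h1 : ∀ b, Φ' (b - (f (a, x)).1) = Φ' (b - (f (a, x')).1) := by
        intro b
        obtain ⟨⟨c, y⟩, hc⟩ := hf.2 (b, 0)
        have h2 := hfop (a, x) (c, y)
        have h3 := hfop (a, x') (c, y)
        rw [hD, hc, ← Prod.mk.eta (p := f (a, x)), hD'] at h2
        rw [hD, hc, ← Prod.mk.eta (p := f (a, x')), hD', h2] at h3
        simpa using h3
      have h2 : ∀ c, Φ' (c + ((f (a, x)).1 - (f (a, x')).1)) = Φ' c + 0 := by
        intro c
        have := h1 (c + (f (a, x)).1)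
        rw [add_sub_cancel_right] at this
        rw [add_zero, this]
        congr 1
        ring
      obtain ⟨i, j, hij⟩ := hn'
      apply hij
      have hd : (f (a, x)).1 - (f (a, x')).1 ≠ 0 := sub_ne_zero.2 hne
      have h3 := zmod_step h2 i ((j - i) / ((f (a, x)).1 - (f (a, x')).1))
      rw [div_mul_cancel₀ _ hd] at h3
      simpa using h3.symm
    obtain ⟨g, hg⟩ : ∃ g : ZMod p → ZMod p, ∀ a x, (f (a, x)).1 = g a :=
      ⟨fun a => (f (a, 0)).1, fun a x => hfst a x 0⟩
    obtain ⟨h, hh⟩ : ∃ h : ZMod p → ZMod p → ZMod p, ∀ a x, (f (a, x)).2 = h a x :=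
      ⟨_, fun _ _ => rfl⟩
    have hfe : ∀ a x, f (a, x) = (g a, h a x) := fun a x => by rw [← hg a x, ← hh]
    have hg1 : ∀ b, g (b + 1) = g b + 1 := by
      intro b
      have h2 := hfop (b, 0) (b, 0)
      rw [hD, hfe, hfe, hD'] at h2
      exact congrArg Prod.fst h2
    have hgk : ∀ b, g b = b + g 0 := by
      intro b
      have := zmod_step hg1 0 b
      simp only [mul_one, zero_add] at this
      rw [this, add_comm]
    have heq : ∀ b c y, h (b + 1) (y + (if b = 0 then S else 0) + Φ c) =
        h b y + (if g b = 0 then S' else 0) + Φ' c := by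
      intro b c y
      have h2 := hfop (b - c, 0) (b, y)
      rw [hD, hfe, hfe, hfe, hD', hgk (b - c), hgk b] at h2
      have h3 := congrArg Prod.snd h2
      simp only [sub_sub_cancel] at h3
      rw [h3, hgk b]
      congr 2
      ring
    have hstep : ∀ b c y, h b (y + Φ c) = h b y + Φ' c := by
      intro b c y
      have h2 := heq (b - 1) c (y - (if b - 1 = 0 then S else 0))
      have h3 := heq (b - 1) 0 (y - (if b - 1 = 0 then S else 0))
      rw [h0, h0', add_zero, add_zero] at h3
      rw [← h3] at h2
      simpa using h2
    obtain ⟨c0, hc0⟩ : ∃ c0, Φ c0 ≠ 0 := by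
      by_contra! hcon
      obtain ⟨i, j, hij⟩ := hn
      exact hij (by rw [hcon, hcon])
    have hlin : ∀ b y, h b y = h b 0 + (Φ' c0 / Φ c0) * y := by
      intro b y
      have h2 := zmod_step (hstep b c0) 0 (y / Φ c0)
      rw [div_mul_cancel₀ _ hc0, zero_add] at h2
      rw [h2]
      ring
    have hΦ : ∀ i, Φ' i = (Φ' c0 / Φ c0) * Φ i := by
      intro i
      have h2 := hstep 0 i 0
      rw [zero_add, hlin] at h2
      exact (add_left_cancel h2).symm
    refine ⟨Φ' c0 / Φ c0, ?_, ?_, hΦ⟩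
    · intro hz
      obtain ⟨i, j, hij⟩ := hn'
      exact hij (by rw [hΦ i, hΦ j, hz, zero_mul, zero_mul])
    · have h2 : ∀ b, h (b + 1) 0 + (if b = 0 then (Φ' c0 / Φ c0) * S else 0) =
          h b 0 + (if b + g 0 = 0 then S' else 0) := by
        intro b
        have h3 := heq b 0 0
        rw [h0, h0', add_zero, add_zero, zero_add, hlin, hgk b] at h3
        rw [← h3]
        simp
      have h3 := Finset.sum_congr (rfl : (Finset.univ : Finset (ZMod p)) = Finset.univ)
        (fun b _ => h2 b)
      have h5 : ∑ b, h (b + 1) 0 = ∑ b, h b 0 :=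
        Equiv.sum_comp (Equiv.addRight (1 : ZMod p)) (fun b => h b 0)
      rw [Finset.sum_add_distrib, Finset.sum_add_distrib, h5] at h3
      have h4 := add_left_cancel h3
      simp only [add_eq_zero_iff_eq_neg, Finset.sum_ite_eq', Finset.mem_univ, if_true] at h4
      exact h4.symm
  · rintro ⟨α, hα, rfl, hΦ⟩
    refine ⟨fun u => (u.1, α * u.2), ?_, ?_⟩
    · rw [← Finite.injective_iff_bijective]
      rintro ⟨a, x⟩ ⟨b, y⟩ hxy
      simp only [Prod.mk.injEq] at hxy
      rw [hxy.1, mul_left_cancel₀ hα hxy.2]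
    · rintro ⟨a, x⟩ ⟨b, y⟩
      rw [hD, hD', hΦ]
      ext
      · rfl
      · simp only
        split_ifs <;> ring

theorem stmt8 {p : ℕ} (hp : p.Prime) {X : Type} (C : CycleSet X)
    (hcard : Nat.card X = p ^ 2) (hind : C.Indecomposable)
    (hretr : ∃ x y : X, x ≠ y ∧ C.op x = C.op y) :
    ((∃ D : CycleSet (ZMod (p ^ 2)),
        (∀ x y : ZMod (p ^ 2), D.op x y = y + 1) ∧ C.Iso D) ∨
     (∃ (Φ : ZMod p → ZMod p) (S : ZMod p), (∃ i j : ZMod p, Φ i ≠ Φ j) ∧ Φ 0 = 0 ∧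
        ∃ D : CycleSet (ZMod p × ZMod p),
          (∀ a b x y : ZMod p,
            D.op (a, x) (b, y) = (b + 1, y + (if b = 0 then S else 0) + Φ (b - a))) ∧
          C.Iso D)) ∧
    (∀ (Φ Φ' : ZMod p → ZMod p) (S S' : ZMod p),
      (∃ i j : ZMod p, Φ i ≠ Φ j) → Φ 0 = 0 →
      (∃ i j : ZMod p, Φ' i ≠ Φ' j) → Φ' 0 = 0 →
      ∀ (D D' : CycleSet (ZMod p × ZMod p)),
        (∀ a b x y : ZMod p,
          D.op (a, x) (b, y) = (b + 1, y + (if b = 0 then S else 0) + Φ (b - a))) →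
        (∀ a b x y : ZMod p,
          D'.op (a, x) (b, y) = (b + 1, y + (if b = 0 then S' else 0) + Φ' (b - a))) →
        (D.Iso D' ↔ ∃ α : ZMod p, α ≠ 0 ∧ S' = α * S ∧ ∀ i : ZMod p, Φ' i = α * Φ i)) := by
  refine ⟨?_, fun Φ Φ' S S' hn h0 hn' h0' D D' hD hD' =>
    iso_two hp Φ Φ' S S' hn h0 hn' h0' D D' hD hD'⟩
  have := Fact.mk hp
  rcases C.retr_cases hp hcard hind hretr with hc | ⟨π, hs, hπ, hπ1⟩
  · left
    have : NeZero (p ^ 2) := ⟨pow_ne_zero 2 hp.ne_zero⟩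
    obtain ⟨e, he⟩ := C.const_shift hcard hind hc
    refine ⟨mkShift (p ^ 2), fun _ _ => rfl, e.symm, e.symm.bijective, fun x y => ?_⟩
    rw [Equiv.symm_apply_eq]
    change _ = e (e.symm y + 1)
    rw [he _ x, e.apply_symm_apply]
  · right
    obtain ⟨w, h1, h2, h3, h4⟩ :=
      C.exists_central hp hcard hind π hs (fun x y => (hπ x y).1) hπ1
    exact C.type_two hp hcard π hs hπ hπ1 w h1 h2 h3 h4
end

section
/- Let p be a prime and Φ : ℤ_p → ℤ_p a non-constant map with Φ(A) = Φ(−A) for all A ∈ ℤ_p. Then the operation (a,x)·(b,y) = (b+x, y + Φ(b−a)) on X = ℤ_p × ℤ_p defines a cycle set that is indecomposable and irretractable and whose permutation group 𝒢(X) is a p-group. Conversely, every indecomposable irretractable cycle set of size p² whose permutation group is a p-group is isomorphic to one of this form. -/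
/-- Iterated forward difference. -/
def Dl {p : ℕ} : ℕ → (ZMod p → ZMod p) → ZMod p → ZMod p
  | 0, g, x => g x
  | n + 1, g, x => Dl n g (x + 1) - Dl n g x

section Diff
variable {p : ℕ}

lemma Dl_zero (g : ZMod p → ZMod p) (x : ZMod p) : Dl 0 g x = g x := rfl

lemma Dl_succ (n : ℕ) (g : ZMod p → ZMod p) (x : ZMod p) :
    Dl (n + 1) g x = Dl n g (x + 1) - Dl n g x := rfl

lemma Dl_one (g : ZMod p → ZMod p) (x : ZMod p) : Dl 1 g x = g (x + 1) - g x := rfl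

lemma Dl_congr (n : ℕ) {g h : ZMod p → ZMod p} (H : ∀ x, g x = h x) (x : ZMod p) :
    Dl n g x = Dl n h x := by
  rw [funext H]

lemma Dl_shift (n : ℕ) (g : ZMod p → ZMod p) (s x : ZMod p) :
    Dl n (fun x => g (x + s)) x = Dl n g (x + s) := by
  induction n generalizing x with
  | zero => rfl
  | succ n ih => simp only [Dl_succ, ih]; rw [add_right_comm]

lemma Dl_shift_left (n : ℕ) (g : ZMod p → ZMod p) (s x : ZMod p) :
    Dl n (fun x => g (s + x)) x = Dl n g (s + x) := by
  simp only [add_comm s]; exact Dl_shift n g s x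

lemma Dl_add (n : ℕ) (g h : ZMod p → ZMod p) (x : ZMod p) :
    Dl n (fun x => g x + h x) x = Dl n g x + Dl n h x := by
  induction n generalizing x with
  | zero => rfl
  | succ n ih => simp only [Dl_succ, ih]; ring

lemma Dl_sub (n : ℕ) (g h : ZMod p → ZMod p) (x : ZMod p) :
    Dl n (fun x => g x - h x) x = Dl n g x - Dl n h x := by
  induction n generalizing x with
  | zero => rfl
  | succ n ih => simp only [Dl_succ, ih]; ring

lemma Dl_mul (n : ℕ) (c : ZMod p) (g : ZMod p → ZMod p) (x : ZMod p) :
    Dl n (fun x => c * g x) x = c * Dl n g x := by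
  induction n generalizing x with
  | zero => rfl
  | succ n ih => simp only [Dl_succ, ih]; ring

lemma Dl_const (n : ℕ) (c x : ZMod p) : Dl (n + 1) (fun _ : ZMod p => c) x = 0 := by
  induction n generalizing x with
  | zero => simp [Dl_succ, Dl_zero]
  | succ n ih => rw [Dl_succ, ih, ih, sub_zero]

lemma Dl_const_of_pos {n : ℕ} (hn : 1 ≤ n) (c x : ZMod p) : Dl n (fun _ : ZMod p => c) x = 0 := by
  obtain ⟨m, rfl⟩ : ∃ m, n = m + 1 := ⟨n - 1, by omega⟩
  exact Dl_const m c x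

lemma Dl_zero_fun (n : ℕ) (x : ZMod p) : Dl n (fun _ : ZMod p => (0 : ZMod p)) x = 0 := by
  induction n generalizing x with
  | zero => rfl
  | succ n ih => rw [Dl_succ, ih, ih, sub_zero]

lemma Dl_Dl (m n : ℕ) (g : ZMod p → ZMod p) (x : ZMod p) :
    Dl m (Dl n g) x = Dl (m + n) g x := by
  induction m generalizing x with
  | zero => rw [zero_add]; rfl
  | succ m ih => rw [Dl_succ, ih, ih, show m + 1 + n = (m + n) + 1 by ring, Dl_succ]

lemma Dl_zero_of_le {m n : ℕ} (h : m ≤ n) {g : ZMod p → ZMod p} (H : ∀ x, Dl m g x = 0)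
    (x : ZMod p) : Dl n g x = 0 := by
  obtain ⟨k, rfl⟩ := Nat.exists_eq_add_of_le' h
  rw [← Dl_Dl, Dl_congr k H, Dl_zero_fun]

lemma Dl_swap (n m : ℕ) (G : ZMod p → ZMod p → ZMod p) (x y : ZMod p) :
    Dl n (fun x => Dl m (fun y => G x y) y) x = Dl m (fun y => Dl n (fun x => G x y) x) y := by
  induction n generalizing x with
  | zero => rfl
  | succ n ih => simp only [Dl_succ, ih, Dl_sub]

variable [hp : Fact p.Prime]

lemma const_of_step {g : ZMod p → ZMod p} (h : ∀ x, g (x + 1) = g x) (x : ZMod p) :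
    g x = g 0 := by
  have key : ∀ n : ℕ, g (n : ZMod p) = g 0 := by
    intro n
    induction n with
    | zero => simp
    | succ n ih => push_cast; rw [h, ih]
  have := key x.val
  rwa [ZMod.natCast_zmod_val] at this

lemma const_of_Dl_one {g : ZMod p → ZMod p} (h : ∀ x, Dl 1 g x = 0) (x : ZMod p) :
    g x = g 0 :=
  const_of_step (fun x => sub_eq_zero.mp (h x)) x

lemma affine_of_Dl_one {g : ZMod p → ZMod p} {k : ZMod p} (h : ∀ x, Dl 1 g x = k) (x : ZMod p) :
    g x = k * x + g 0 := by
  have := const_of_step (g := fun x => g x - k * x) (fun x => by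
    have := h x; rw [Dl_one] at this; linear_combination this) x
  simp only [mul_zero, sub_zero] at this
  linear_combination this

lemma affine_of_Dl_succ {n : ℕ} {g : ZMod p → ZMod p} {k : ZMod p}
    (h : ∀ x, Dl (n + 1) g x = k) (x : ZMod p) :
    Dl n g x = k * x + Dl n g 0 :=
  affine_of_Dl_one (g := Dl n g) h x

lemma affine_of_Dl_two {g : ZMod p → ZMod p} (h : ∀ x, Dl 2 g x = 0) (x : ZMod p) :
    g x = Dl 1 g 0 * x + g 0 :=
  affine_of_Dl_one (const_of_Dl_one (g := Dl 1 g) h) x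

lemma Dl_char (g : ZMod p → ZMod p) (x : ZMod p) : Dl p g x = 0 := by
  let S : Module.End (ZMod p) (ZMod p → ZMod p) :=
    { toFun := fun g x => g (x + 1), map_add' := fun _ _ => rfl, map_smul' := fun _ _ => rfl }
  have hS : ∀ n : ℕ, ∀ g x, (S ^ n) g x = g (x + n) := by
    intro n
    induction n with
    | zero => intro g x; simp
    | succ n ih =>
      intro g x
      rw [pow_succ, Module.End.mul_apply, ih]
      change g (x + n + 1) = _
      push_cast; rw [add_assoc]
  have hD : ∀ n : ℕ, ∀ g x, ((S - 1) ^ n) g x = Dl n g x := by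
    intro n
    induction n with
    | zero => intro g x; simp [Dl_zero]
    | succ n ih =>
      intro g x
      rw [pow_succ', Module.End.mul_apply, Dl_succ, ← ih, ← ih]
      rfl
  have : CharP (Module.End (ZMod p) (ZMod p → ZMod p)) p :=
    charP_of_injective_algebraMap (algebraMap (ZMod p) _).injective p
  have := sub_pow_char_of_commute (p := p) (h := Commute.one_right S)
  rw [← hD, this, one_pow]
  simp [hS]

lemma exists_top {g : ZMod p → ZMod p} (h : ∃ x, g x ≠ 0) :
    ∃ k : ℕ, ∃ e : ZMod p, e ≠ 0 ∧ ∀ x, Dl k g x = e := by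
  classical
  have hex : ∃ n, ∀ x, Dl n g x = 0 := ⟨p, Dl_char g⟩
  have h0 : Nat.find hex ≠ 0 := by
    intro h1
    obtain ⟨x, hx⟩ := h
    have := Nat.find_spec hex x
    rw [h1] at this
    exact hx this
  obtain ⟨k, hk⟩ := Nat.exists_eq_succ_of_ne_zero h0
  have h2 := Nat.find_spec hex
  rw [hk] at h2
  have h3 := Nat.find_min hex (m := k) (by omega)
  push Not at h3
  obtain ⟨x, hx⟩ := h3
  have hc := const_of_Dl_one (g := Dl k g) h2
  refine ⟨k, Dl k g 0, ?_, hc⟩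
  rw [← hc x]; exact hx

/-- top for a nonconstant function -/
lemma exists_top_succ {g : ZMod p → ZMod p} (h : ¬ ∀ x, g x = g 0) :
    ∃ k : ℕ, ∃ e : ZMod p, e ≠ 0 ∧ ∀ x, Dl (k + 1) g x = e := by
  have : ∃ x, Dl 1 g x ≠ 0 := by
    by_contra! H
    exact h (const_of_Dl_one H)
  obtain ⟨k, e, he, hk⟩ := exists_top this
  exact ⟨k, e, he, fun x => by rw [← Dl_Dl]; exact hk x⟩

lemma span_lemma {d : ℕ} (hd : 1 ≤ d) (t g : ZMod p → ZMod p)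
    (hg : ∀ s x, Dl d (fun x => g (s + t x)) x = 0) (ht : ∃ x, Dl d t x ≠ 0) (s : ZMod p) :
    g s = g 0 := by
  by_contra hs
  obtain ⟨k, e, he, hk⟩ := exists_top_succ (g := g) (fun H => hs (H s))
  have key : ∀ j : ℕ, ∀ s x, Dl d (fun x => Dl j g (s + t x)) x = 0 := by
    intro j
    induction j with
    | zero => exact hg
    | succ j ih =>
      intro s x
      simp only [Dl_succ, Dl_sub, ih, sub_zero]
      rw [← ih (s + 1) x]
      exact Dl_congr d (fun x => by rw [add_right_comm]) x
  obtain ⟨x, hx⟩ := ht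
  have h1 := key k 0 x
  rw [Dl_congr d (fun x => affine_of_Dl_succ hk (0 + t x)) x] at h1
  simp only [zero_add, Dl_add, Dl_mul, Dl_const_of_pos hd, add_zero] at h1
  exact (mul_ne_zero he hx) h1

end Diff

section Core
variable {p : ℕ}

/-- Coordinate data of the cycle set on `ZMod p × ZMod p`. -/
structure Good (T : ZMod p → ZMod p → ZMod p) (F : ZMod p → ZMod p → ZMod p → ZMod p) : Prop where
  h1 : ∀ a x b y, T (b + T a x) (y + F a x b) + T a x = T (a + T b y) (x + F b y a) + T b y
  h2 : ∀ a x b y c, F (b + T a x) (y + F a x b) (c + T a x) + F a x c =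
    F (a + T b y) (x + F b y a) (c + T b y) + F b y c
  irr : ∀ a x b y, T a x = T b y → (∀ c, F a x c = F b y c) → a = b ∧ x = y
  nz : ∃ a x, T a x ≠ 0

lemma Good.change {T : ZMod p → ZMod p → ZMod p} {F : ZMod p → ZMod p → ZMod p → ZMod p}
    (H : Good T F) (g : ZMod p → ZMod p) :
    Good (fun a x => T a (x - g a))
      (fun a x b => F a (x - g a) b + g (b + T a (x - g a)) - g b) := by
  refine ⟨?_, ?_, ?_, ?_⟩
  · intro a x b y
    have := H.h1 a (x - g a) b (y - g b)
    convert this using 3 <;> ring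
  · intro a x b y c
    have h1 := H.h1 a (x - g a) b (y - g b)
    have h2 := H.h2 a (x - g a) b (y - g b) c
    have e1 : y + (F a (x - g a) b + g (b + T a (x - g a)) - g b) - g (b + T a (x - g a))
      = y - g b + F a (x - g a) b := by ring
    have e2 : x + (F b (y - g b) a + g (a + T b (y - g b)) - g a) - g (a + T b (y - g b))
      = x - g a + F b (y - g b) a := by ring
    rw [e1, e2]
    have e3 : c + T a (x - g a) + T (b + T a (x - g a)) (y - g b + F a (x - g a) b)
      = c + T b (y - g b) + T (a + T b (y - g b)) (x - g a + F b (y - g b) a) := by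
      linear_combination h1
    rw [e3]
    linear_combination h2
  · intro a x b y hT hF
    have := H.irr a (x - g a) b (y - g b) hT (fun c => by
      have := hF c
      rw [hT] at this
      linear_combination this)
    obtain ⟨rfl, h⟩ := this
    exact ⟨rfl, by linear_combination h⟩
  · obtain ⟨a, x, h⟩ := H.nz
    exact ⟨a, x + g a, by simpa using h⟩

variable [hp : Fact p.Prime]

lemma E_const {T : ZMod p → ZMod p → ZMod p} {F : ZMod p → ZMod p → ZMod p → ZMod p}
    (H : Good T F) {d : ℕ} {E : ZMod p → ZMod p} (hE : ∀ a x, Dl d (T a) x = E a) (a : ZMod p) :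
    E a = E 0 := by
  have A1 : ∀ a x b y, Dl d (fun y => T (b + T a x) (y + F a x b) - T b y) y
      = E (b + T a x) - E b := by
    intro a x b y
    rw [Dl_sub, Dl_shift d (T (b + T a x)), hE, hE]
  let h : ZMod p → ZMod p → ZMod p → ZMod p := fun a b x =>
    Dl d (fun x => E (b + T a x) - E b) x
  have sym : ∀ a b x y, h a b x = h b a y := by
    intro a b x y
    have e1 : h a b x = Dl d (fun x => Dl d (fun y => T (b + T a x) (y + F a x b) - T b y) y) x :=
      Dl_congr d (fun x => (A1 a x b y).symm) x
    have e2 : h b a y = Dl d (fun y => Dl d (fun x => T (a + T b y) (x + F b y a) - T a x) x) y :=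
      Dl_congr d (fun y => (A1 b y a x).symm) y
    rw [e1, e2, Dl_swap]
    refine Dl_congr d (fun y => Dl_congr d (fun x => ?_) x) y
    linear_combination H.h1 a x b y
  by_contra hs
  obtain ⟨k, e, he, hk⟩ := exists_top_succ (g := E) (fun H => hs (H a))
  have B1 : ∀ a b x, Dl k (fun b => h a b x) b = e * E a := by
    intro a b x
    change Dl k (fun b => Dl d (fun x => E (b + T a x) - E b) x) b = _
    rw [Dl_swap]
    have : ∀ x, Dl k (fun b => E (b + T a x) - E b) b = e * T a x := by
      intro x
      rw [Dl_sub, Dl_shift k E, affine_of_Dl_succ hk, affine_of_Dl_succ hk b]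
      ring
    rw [Dl_congr d this, Dl_mul]
    rw [show Dl d (fun x => T a x) x = _ from hE a x]
  have B2 : ∀ x y, Dl (k + 1) (fun a => Dl k (fun b => h a b x) y) 0 = e * e := by
    intro x y
    rw [Dl_congr (k + 1) (fun a => B1 a y x), Dl_mul]
    congr 1
    exact hk 0
  have B3 : ∀ x y, Dl (k + 1) (fun a => Dl k (fun b => h a b x) y) 0 = 0 := by
    intro x y
    rw [Dl_swap]
    have : ∀ b, Dl (k + 1) (fun a => h a b x) 0 = 0 := by
      intro b
      rw [Dl_congr (k + 1) (fun a => sym a b x 0), Dl_succ, B1, B1, sub_self]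
    rw [Dl_congr k this, Dl_zero_fun]
  have := B2 0 0
  rw [B3] at this
  exact mul_ne_zero he he this.symm

lemma matrix_contra {t : ZMod p} {M : ZMod p → ZMod p → ZMod p}
    (hM : ∀ a b c, M (a + t) (c + t) = M a c + M a b * M (b + t) (c + t))
    (hn : ∀ a, ∃ c, M a c ≠ 0) : False := by
  have g0 : ∀ a, M a a = 0 := by
    intro a
    by_contra ha
    have key : ∀ n : ℕ, M (a + n * t) (a + n * t) * (1 - n * M a a) = M a a := by
      intro n
      induction n with
      | zero => simp
      | succ n ih =>
        have h1 := hM (a + n * t) (a + n * t) (a + n * t)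
        have e1 : a + ((n + 1 : ℕ) : ZMod p) * t = a + n * t + t := by push_cast; ring
        rw [e1]
        push_cast
        linear_combination (1 - n * M a a) * h1 + (1 + M (a + n * t + t) (a + n * t + t)) * ih
    have h2 := key ((M a a)⁻¹).val
    rw [ZMod.natCast_zmod_val, inv_mul_cancel₀ ha, sub_self, mul_zero] at h2
    exact ha h2.symm
  have hs : ∀ a c, M (a + t) (c + t) = M a c := by
    intro a c
    have := hM a a c
    rw [g0] at this
    linear_combination this
  have hz : ∀ a b c, M a b * M b c = 0 := by
    intro a b c
    have := hM a b c
    rw [hs, hs] at this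
    linear_combination -this
  obtain ⟨c, hc⟩ := hn 0
  obtain ⟨c', hc'⟩ := hn c
  exact mul_ne_zero hc hc' (hz 0 c c')

lemma d_zero {t : ZMod p} (ht : t ≠ 0) {F : ZMod p → ZMod p → ZMod p → ZMod p}
    (h2 : ∀ a x b y c, F (b + t) (y + F a x b) (c + t) + F a x c =
      F (a + t) (x + F b y a) (c + t) + F b y c)
    (irr : ∀ a x y, (∀ c, F a x c = F a y c) → x = y) : False := by
  let P : ZMod p → ℕ → Prop := fun b k => ∀ c x, Dl k (fun x => F b x c) x = 0
  have P1 : ∀ b, ¬ P b 1 := by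
    intro b hb
    have := irr b 1 0 (fun c => const_of_Dl_one (hb c) 1)
    exact one_ne_zero this
  by_cases hA : ∀ a, ¬ P a 2
  · have step : ∀ k, 1 ≤ k → (∀ b, P b (k + 1)) → ∀ b, P b k := by
      intro k hk hP b a y
      -- top degree at a + t
      classical
      have hex : ∃ n, P (a + t) n := ⟨p, fun c x => Dl_char _ x⟩
      have hn3 : 3 ≤ Nat.find hex := by
        by_contra hlt
        apply hA (a + t)
        intro c x
        exact Dl_zero_of_le (by omega) (Nat.find_spec hex c) x
      obtain ⟨δ, hδ⟩ : ∃ δ, Nat.find hex = δ + 1 + 1 + 1 := ⟨Nat.find hex - 3, by omega⟩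
      have hs := Nat.find_spec hex
      rw [hδ] at hs
      have hm := Nat.find_min hex (m := δ + 1 + 1) (by omega)
      have hm' : ∃ c x, Dl (δ + 1 + 1) (fun x => F (a + t) x c) x ≠ 0 := by
        by_contra! hh; exact hm hh
      obtain ⟨c, x0, hc⟩ := hm'
      have hφ : ∀ x, Dl (δ + 1 + 1) (fun x => F (a + t) x c) x
          = Dl (δ + 1 + 1) (fun x => F (a + t) x c) 0 :=
        const_of_Dl_one (g := Dl (δ + 1 + 1) (fun x => F (a + t) x c)) (hs c)
      set φ := Dl (δ + 1 + 1) (fun x => F (a + t) x c) 0 with hφd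
      have hφ0 : φ ≠ 0 := by rw [← hφ x0]; exact hc
      obtain ⟨c', rfl⟩ : ∃ c', c = c' + t := ⟨c - t, by ring⟩
      have L : Dl (δ + 1) (fun x => Dl k (fun y => F (b + t) (y + F a x b) (c' + t) + F a x c') y) 0
          = 0 := by
        have hb := hP (b + t) (c' + t)
        have hbc := const_of_Dl_one (g := Dl k (fun x => F (b + t) x (c' + t))) hb
        have : ∀ x, Dl k (fun y => F (b + t) (y + F a x b) (c' + t) + F a x c') y
            = Dl k (fun x => F (b + t) x (c' + t)) 0 := by
          intro x
          rw [Dl_add, Dl_shift k (fun y => F (b + t) y (c' + t)), hbc, Dl_const_of_pos hk, add_zero]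
        rw [Dl_congr _ this, Dl_const]
      have e : ∀ x, Dl k (fun y => F (b + t) (y + F a x b) (c' + t) + F a x c') y
          = Dl k (fun y => F (a + t) (x + F b y a) (c' + t) + F b y c') y :=
        fun x => Dl_congr k (fun y => h2 a x b y c') y
      rw [Dl_congr _ e, Dl_swap] at L
      have e2 : ∀ y, Dl (δ + 1) (fun x => F (a + t) (x + F b y a) (c' + t) + F b y c') 0
          = φ * F b y a + Dl (δ + 1) (fun x => F (a + t) x (c' + t)) 0 := by
        intro y
        rw [Dl_add, Dl_shift (δ + 1) (fun x => F (a + t) x (c' + t)), Dl_const, add_zero,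
          affine_of_Dl_succ hφ, zero_add]
      rw [Dl_congr _ e2, Dl_add, Dl_mul, Dl_const_of_pos hk, add_zero] at L
      exact (mul_eq_zero.mp L).resolve_left hφ0
    have all : ∀ j, ∀ k, 1 ≤ k → k + j = p → ∀ b, P b k := by
      intro j
      induction j with
      | zero =>
        intro k _ hk b c x
        rw [add_zero] at hk
        subst hk
        exact Dl_char _ x
      | succ j ih =>
        intro k hk hkj
        exact step k hk (ih (k + 1) (by omega) (by omega))
    have := hp.out.one_lt
    exact P1 0 (all (p - 1) 1 le_rfl (by omega) 0)
  · push Not at hA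
    obtain ⟨a, ha⟩ := hA
    have step : ∀ b, P b 2 → P (b + t) 2 := by
      intro b hb c y
      obtain ⟨a', rfl⟩ : ∃ a', a = a' + t := ⟨a - t, by ring⟩
      obtain ⟨c', rfl⟩ : ∃ c', c = c' + t := ⟨c - t, by ring⟩
      have haf := affine_of_Dl_two (ha (c' + t))
      have e : Dl 2 (fun y => F (b + t) (y + F a' 0 b) (c' + t) + F a' 0 c') (y - F a' 0 b)
          = Dl 2 (fun y => F (a' + t) (0 + F b y a') (c' + t) + F b y c') (y - F a' 0 b) :=
        Dl_congr 2 (fun y => h2 a' 0 b y c') _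
      have e2 : ∀ y, F (a' + t) (0 + F b y a') (c' + t) =
        Dl 1 (fun x => F (a' + t) x (c' + t)) 0 * F b y a' + F (a' + t) 0 (c' + t) := by
        intro y
        rw [zero_add]
        exact haf _
      rw [Dl_add, Dl_shift 2 (fun y => F (b + t) y (c' + t)), Dl_const 1, add_zero, sub_add_cancel,
        Dl_add, Dl_congr _ e2, Dl_add, Dl_mul, Dl_const 1, hb c',
        show Dl 2 (fun y => F b y a') _ = 0 from hb a' _] at e
      simpa using e
    have iter : ∀ n : ℕ, P (a + n * t) 2 := by
      intro n
      induction n with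
      | zero => simpa using ha
      | succ n ih =>
        have := step _ ih
        rwa [show a + ((n + 1 : ℕ) : ZMod p) * t = a + n * t + t by push_cast; ring]
    have all : ∀ b, P b 2 := by
      intro b
      have := iter ((b - a) / t).val
      rw [ZMod.natCast_zmod_val, div_mul_cancel₀ _ ht] at this
      simpa using this
    let M : ZMod p → ZMod p → ZMod p := fun a c => Dl 1 (fun x => F a x c) 0
    have hF : ∀ a x c, F a x c = M a c * x + F a 0 c := by
      intro a x c
      exact affine_of_Dl_two (all a c) x
    refine matrix_contra (t := t) (M := M) ?_ ?_
    · intro a b c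
      have q1 := h2 a 1 b 0 c
      have q0 := h2 a 0 b 0 c
      rw [hF (b + t), hF (a + t), hF a 1 b, hF a 1 c] at q1
      rw [hF (b + t), hF (a + t)] at q0
      linear_combination q0 - q1
    · intro a
      by_contra! hh
      apply P1 a
      intro c
      have : ∀ x, F a x c = F a 0 c := fun x => by rw [hF, hh, zero_mul, zero_add]
      intro x
      rw [Dl_congr _ this, Dl_const]

end Core

section Core2
variable {p : ℕ} [hp : Fact p.Prime]

lemma d_two_step {T : ZMod p → ZMod p → ZMod p} {F : ZMod p → ZMod p → ZMod p → ZMod p}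
    (H : Good T F) {d : ℕ} (hd : ∀ a, ∃ x, Dl d (T a) x ≠ 0)
    {j : ℕ} (hj : j + 2 ≤ d) (hF : ∀ a b x, Dl (j + 2) (fun x => F a x b) x = 0)
    (a b x : ZMod p) : Dl (j + 1) (fun x => F a x b) x = 0 := by
  let φ : ZMod p → ZMod p → ZMod p := fun a b => Dl (j + 1) (fun x => F a x b) 0
  let ψ : ZMod p → ZMod p → ZMod p := fun a b => Dl j (fun x => F a x b) 0
  have hφ : ∀ a b x, Dl (j + 1) (fun x => F a x b) x = φ a b := fun a b =>
    const_of_Dl_one (g := Dl (j + 1) (fun x => F a x b)) (hF a b)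
  have hψ : ∀ a b x, Dl j (fun x => F a x b) x = φ a b * x + ψ a b := fun a b =>
    affine_of_Dl_succ (hφ a b)
  have R : ∀ n a b c x y, Dl (j + 2) (fun x => Dl n (fun y =>
      F (b + T a x) (y + F a x b) (c + T a x) + F a x c) y) x = 0 := by
    intro n a b c x y
    have e : ∀ x, Dl n (fun y => F (b + T a x) (y + F a x b) (c + T a x) + F a x c) y
       = Dl n (fun y => F (a + T b y) (x + F b y a) (c + T b y) + F b y c) y :=
      fun x => Dl_congr n (fun y => H.h2 a x b y c) y
    rw [Dl_congr _ e, Dl_swap]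
    have e2 : ∀ y, Dl (j + 2) (fun x => F (a + T b y) (x + F b y a) (c + T b y) + F b y c) x
        = 0 := by
      intro y
      rw [Dl_add, Dl_shift (j + 2) (fun x => F (a + T b y) x (c + T b y)), hF,
        Dl_const (j + 1), add_zero]
    rw [Dl_congr _ e2, Dl_zero_fun]
  have e1 : ∀ a b c x y, Dl (j + 1) (fun y =>
      F (b + T a x) (y + F a x b) (c + T a x) + F a x c) y = φ (b + T a x) (c + T a x) := by
    intro a b c x y
    rw [Dl_add, Dl_shift (j + 1) (fun y => F (b + T a x) y (c + T a x)), hφ, Dl_const, add_zero]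
  have φinv : ∀ b c s, φ (b + s) (c + s) = φ b c := by
    intro b c s
    have := span_lemma (d := d) (by omega) (T 0) (fun s => φ (b + s) (c + s)) (by
      intro s x
      refine Dl_zero_of_le hj (fun x => ?_) x
      refine Eq.trans (Dl_congr _ (fun x => ?_) x) (R (j + 1) 0 (b + s) (c + s) x 0)
      rw [e1, add_assoc, add_assoc]) (hd 0) s
    simpa using this
  have ψinv : ∀ b c s, ψ (b + s) (c + s) = ψ b c := by
    intro b c s
    have := span_lemma (d := d) (by omega) (T 0) (fun s => ψ (b + s) (c + s)) (by
      intro s x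
      refine Dl_zero_of_le hj (fun x => ?_) x
      have e2 : ∀ x, Dl j (fun y =>
          F (b + s + T 0 x) (y + F 0 x (b + s)) (c + s + T 0 x) + F 0 x (c + s)) 0
          = φ (b + s) (c + s) * F 0 x (b + s) + ψ (b + (s + T 0 x)) (c + (s + T 0 x))
            + Dl j (fun _ => F 0 x (c + s)) 0 := by
        intro x
        rw [Dl_add, Dl_shift j (fun y => F (b + s + T 0 x) y (c + s + T 0 x)), hψ, φinv, zero_add,
          add_assoc b, add_assoc c]
      have := R j 0 (b + s) (c + s) x 0
      rw [Dl_congr _ e2, Dl_add, Dl_add, Dl_mul, hF, mul_zero, zero_add,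
        Dl_swap (j + 2) j (fun x _ => F 0 x (c + s)), Dl_congr j (fun y => hF 0 (c + s) x), Dl_zero_fun, add_zero] at this
      exact this) (hd 0) s
    simpa using this
  have star : ∀ a b c x y, Dl (j + 1) (fun y => F (a + T b y) (x + F b y a) (c + T b y)) y = 0 := by
    intro a b c x y
    have := e1 a b c x y
    rw [Dl_congr _ (fun y => H.h2 a x b y c), Dl_add, hφ, φinv] at this
    linear_combination this
  have hz : ∀ a b c, φ a c * φ b a = 0 := by
    intro a b c
    have h0 : Dl j (fun x => Dl (j + 1) (fun y => F (a + T b y) (x + F b y a) (c + T b y)) 0) 0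
        = 0 := by
      rw [Dl_congr _ (fun x => star a b c x 0), Dl_zero_fun]
    rw [Dl_swap] at h0
    have e3 : ∀ y, Dl j (fun x => F (a + T b y) (x + F b y a) (c + T b y)) 0
        = φ a c * F b y a + ψ a c := by
      intro y
      rw [Dl_shift j (fun x => F (a + T b y) x (c + T b y)), hψ, φinv, ψinv, zero_add]
    rw [Dl_congr _ e3, Dl_add, Dl_mul, hφ, Dl_const, add_zero] at h0
    exact h0
  rw [hφ]
  have h1 := hz b a (b + (b - a))
  have h2 := φinv a b (b - a)
  rw [add_sub_cancel] at h2
  rw [h2] at h1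
  exact mul_self_eq_zero.mp h1

lemma d_two {T : ZMod p → ZMod p → ZMod p} {F : ZMod p → ZMod p → ZMod p → ZMod p}
    (H : Good T F) {m : ℕ} {κ : ZMod p} (hκ : κ ≠ 0)
    (hT : ∀ a x, Dl (m + 1) (T a) x = κ * x) : False := by
  have hT2 : ∀ a x, Dl (m + 2) (T a) x = κ := by
    intro a x
    rw [show m + 2 = m + 1 + 1 from rfl, Dl_succ, hT, hT]; ring
  have hd : ∀ a, ∃ x, Dl (m + 2) (T a) x ≠ 0 := fun a => ⟨0, by rw [hT2]; exact hκ⟩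
  have hX : ∀ a b x y, Dl (m + 2) (fun x => T (b + T a x) (y + F a x b)) x = 0 := by
    intro a b x y
    have e : ∀ x, T (b + T a x) (y + F a x b) = T (a + T b y) (x + F b y a) - T a x + T b y := by
      intro x
      linear_combination H.h1 a x b y
    rw [Dl_congr _ e, Dl_add, Dl_sub, Dl_shift (m + 2) (T (a + T b y)), Dl_const (m + 1), hT2,
      show Dl (m + 2) (fun x => T a x) x = κ from hT2 a x]
    ring
  have hXj : ∀ j a b x y, Dl (m + 2) (fun x => Dl j (fun y => T (b + T a x) (y + F a x b)) y) x
      = 0 := by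
    intro j a b x y
    rw [Dl_swap, Dl_congr _ (fun y => hX a b x y), Dl_zero_fun]
  have F0 : ∀ a b x, Dl (m + 2) (fun x => F a x b) x = 0 := by
    intro a b x
    have := hXj (m + 1) a b x 0
    have e : ∀ x, Dl (m + 1) (fun y => T (b + T a x) (y + F a x b)) 0 = κ * F a x b := by
      intro x
      rw [Dl_shift (m + 1) (T (b + T a x)), hT, zero_add]
    rw [Dl_congr _ e, Dl_mul] at this
    exact (mul_eq_zero.mp this).resolve_left hκ
  have Fdesc : ∀ i, ∀ j, j + i = m + 1 → ∀ a b x, Dl (j + 1) (fun x => F a x b) x = 0 := by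
    intro i
    induction i with
    | zero =>
      intro j hj
      rw [add_zero] at hj
      subst hj
      exact F0
    | succ i ih =>
      intro j hj
      exact d_two_step H hd (j := j) (by omega) (ih (j + 1) (by omega))
  have Fx : ∀ a x b, F a x b = F a 0 b := fun a x b =>
    const_of_Dl_one (Fdesc (m + 1) 0 (by omega) a b) x
  have Tj : ∀ i, ∀ j, j + i = m + 1 → ∀ a x, Dl j (T a) x = Dl j (T 0) x := by
    intro i
    induction i with
    | zero =>
      intro j hj a x
      rw [add_zero] at hj
      subst hj
      rw [hT, hT]
    | succ i ih =>
      intro j hj a x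
      have ih' := ih (j + 1) (by omega)
      have split : ∀ a x, Dl j (T a) x = Dl j (T 0) x + (Dl j (T a) 0 - Dl j (T 0) 0) := by
        intro a x
        have := const_of_Dl_one (g := fun x => Dl j (T a) x - Dl j (T 0) x) (fun x => by
          have := ih' a x
          rw [Dl_succ, Dl_succ] at this
          rw [Dl_one]
          linear_combination this) x
        linear_combination this
      have := span_lemma (d := m + 2) (by omega) (T 0)
        (fun a => Dl j (T a) 0 - Dl j (T 0) 0) (by
        intro b x
        have h := hXj j 0 b x 0
        have e : ∀ x, Dl j (fun y => T (b + T 0 x) (y + F 0 x b)) 0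
          = Dl j (T 0) (F 0 0 b) + (Dl j (T (b + T 0 x)) 0 - Dl j (T 0) 0) := by
          intro x
          rw [Dl_shift j (T (b + T 0 x)), Fx, zero_add, split]
        rw [Dl_congr _ e, Dl_add, Dl_const (m + 1), zero_add] at h
        exact h) (hd 0) a
      rw [split, this]
      ring
  have Ta : ∀ a x, T a x = T 0 x := Tj (m + 1) 0 (by omega)
  by_cases hf : ∀ a b, F a 0 b = 0
  · have := H.irr 0 0 1 0 (Ta 1 0).symm (fun c => by rw [hf, hf])
    exact zero_ne_one this.1
  · push Not at hf
    obtain ⟨a, b, hab⟩ := hf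
    have q : ∀ y, T 0 (y + F a 0 b) - T 0 y = T 0 (0 + F b 0 a) - T 0 0 := by
      intro y
      have := H.h1 a 0 b y
      rw [Ta (b + T a 0), Ta (a + T b y), Ta a, Ta b, Fx b y] at this
      linear_combination this
    set k := F a 0 b
    set C := T 0 (0 + F b 0 a) - T 0 0
    have lin := affine_of_Dl_one (g := fun z => T 0 (k * z)) (k := C) (fun z => by
      rw [Dl_one, mul_add, mul_one]
      exact q _)
    have lin2 : ∀ x, T 0 x = (C / k) * x + T 0 0 := by
      intro x
      have := lin (x / k)
      rw [mul_div_cancel₀ x hab, mul_zero] at this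
      rw [this]
      ring
    have : ∀ x, Dl 2 (T 0) x = 0 := by
      intro x
      rw [show (2 : ℕ) = 1 + 1 from rfl, Dl_succ, Dl_one, Dl_one, lin2 (x + 1 + 1), lin2 (x + 1),
        lin2 x]
      ring
    have h2 := Dl_zero_of_le (n := m + 2) (by omega) this 0
    rw [hT2] at h2
    exact hκ h2

theorem core {T : ZMod p → ZMod p → ZMod p} {F : ZMod p → ZMod p → ZMod p → ZMod p}
    (H : Good T F) : ∃ κ : ZMod p, κ ≠ 0 ∧ ∃ e : ZMod p → ZMod p, ∀ a x, T a x = κ * x + e a := by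
  classical
  have hex : ∃ n, ∀ a x, Dl n (T a) x = 0 := ⟨p, fun a => Dl_char _⟩
  have h0 : Nat.find hex ≠ 0 := by
    intro h1
    obtain ⟨a, x, hx⟩ := H.nz
    have := Nat.find_spec hex a x
    rw [h1] at this
    exact hx this
  obtain ⟨d, hk⟩ := Nat.exists_eq_succ_of_ne_zero h0
  have h2 := Nat.find_spec hex
  rw [hk] at h2
  have h3 := Nat.find_min hex (m := d) (by omega)
  push Not at h3
  obtain ⟨a0, x0, hx0⟩ := h3
  have hE : ∀ a x, Dl d (T a) x = Dl d (T a) 0 := fun a => const_of_Dl_one (g := Dl d (T a)) (h2 a)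
  have hE0 : ∀ a, Dl d (T a) 0 = Dl d (T 0) 0 := E_const H (E := fun a => Dl d (T a) 0) hE
  set κ := Dl d (T 0) 0 with hκd
  have hκ : κ ≠ 0 := by rw [← hE0 a0, ← hE]; exact hx0
  have hT : ∀ a x, Dl d (T a) x = κ := fun a x => by rw [hE, hE0]
  match d, hT with
  | 0, hT =>
    exfalso
    have hT' : ∀ a x, T a x = κ := hT
    refine d_zero hκ (F := F) ?_ ?_
    · intro a x b y c
      have := H.h2 a x b y c
      simpa only [hT'] using this
    · intro a x y h
      exact (H.irr a x a y (by rw [hT', hT']) h).2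
  | 1, hT => exact ⟨κ, hκ, fun a => T a 0, fun a => affine_of_Dl_one (hT a)⟩
  | m + 2, hT =>
    exfalso
    let g : ZMod p → ZMod p := fun a => Dl (m + 1) (T a) 0 / κ
    refine d_two (H.change g) hκ (m := m) ?_
    intro a x
    simp only [sub_eq_add_neg]
    rw [Dl_shift (m + 1) (T a), affine_of_Dl_succ (hT a)]
    simp only [g]
    field_simp
    ring

theorem core_final {T : ZMod p → ZMod p → ZMod p} {F : ZMod p → ZMod p → ZMod p → ZMod p}
    (H : Good T F) {κ : ZMod p} (hκ : κ ≠ 0) (hT : ∀ a x, T a x = κ * x) :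
    ∃ Φ : ZMod p → ZMod p, (∃ i j : ZMod p, Φ i ≠ Φ j) ∧ (∀ A : ZMod p, Φ (-A) = Φ A) ∧
      ∀ a x b, F a x b = Φ (b - a) := by
  have sym : ∀ a x b y, F a x b = F b y a := by
    intro a x b y
    have := H.h1 a x b y
    simp only [hT] at this
    have h : κ * (F a x b - F b y a) = 0 := by linear_combination this
    exact sub_eq_zero.mp ((mul_eq_zero.mp h).resolve_left hκ)
  have Fx : ∀ a x b, F a x b = F a 0 b := fun a x b => by rw [sym a x b 0, sym b 0 a 0]
  have inv : ∀ b c s, F (b + s) 0 (c + s) = F b 0 c := by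
    intro b c s
    have := H.h2 0 (s / κ) b 0 c
    simp only [hT, Fx _ (_ + _), Fx _ (_ / _), mul_zero, add_zero, mul_div_cancel₀ s hκ] at this
    linear_combination this
  have form : ∀ a x b, F a x b = F 0 0 (b - a) := by
    intro a x b
    rw [Fx]
    have := inv 0 (b - a) a
    simpa using this
  refine ⟨fun A => F 0 0 A, ?_, ?_, form⟩
  · by_contra! hh
    have := H.irr 0 0 1 0 (by rw [hT, hT]) (fun c => by rw [form, form 1]; exact hh _ _)
    exact zero_ne_one this.1
  · intro A
    have := sym 0 0 A 0
    rw [form A] at this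
    simpa using this.symm

end Core2
lemma pow_mod_of {G : Type*} [Monoid G] {z : G} {n : ℕ} (h : orderOf z = n) (k : ℕ) :
    z ^ (k % n) = z ^ k := by
  rw [← h, pow_mod_orderOf]


section Coords

lemma coords {p : ℕ} [hp : Fact p.Prime] {G X : Type*} [Group G] [Finite G] [MulAction G X]
    [FaithfulSMul G X] [MulAction.IsPretransitive G X] (hX : Nat.card X = p ^ 2)
    (hG : IsPGroup p G) :
    ∃ (t : G →* Multiplicative (ZMod p)) (ψ : ZMod p × ZMod p → X) (f : G → ZMod p → ZMod p),
      Function.Surjective t ∧ Function.Bijective ψ ∧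
      ∀ g b y, g • ψ (b, y) = ψ (b + (t g).toAdd, y + f g b) := by
  have p1 := hp.out.one_lt
  have hXf : Finite X := Nat.finite_of_card_ne_zero (by rw [hX]; positivity)
  have hXn : Nontrivial X := by
    rw [← Finite.one_lt_card_iff_nontrivial, hX]
    exact Nat.one_lt_pow (by norm_num) p1
  obtain ⟨x0, x1, hx01⟩ := exists_pair_ne X
  have hGn : Nontrivial G := by
    obtain ⟨g, hg⟩ := MulAction.exists_smul_eq G x0 x1
    refine ⟨⟨g, 1, ?_⟩⟩
    rintro rfl
    rw [one_smul] at hg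
    exact hx01 hg
  have hcn := hG.center_nontrivial
  -- central element of order p
  obtain ⟨z, hz⟩ : ∃ z : Subgroup.center G, orderOf z = p := by
    have hc : IsPGroup p (Subgroup.center G) := hG.to_subgroup _
    obtain ⟨n, hn0, hn⟩ := hc.nontrivial_iff_card.mp inferInstance
    exact exists_prime_orderOf_dvd_card' p (hn.symm ▸ dvd_pow_self _ (ne_of_gt hn0))
  obtain ⟨ζ, hζc⟩ := z
  rw [← Subgroup.orderOf_coe] at hz
  simp only at hz
  have comm : ∀ g : G, g * ζ = ζ * g := fun g => (Subgroup.mem_center_iff.mp hζc g)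
  have commp : ∀ (g : G) (n : ℕ), g * ζ ^ n = ζ ^ n * g := fun g n =>
    (Commute.pow_right (comm g) n)
  have hζ1 : ζ ≠ 1 := by
    rintro rfl
    rw [orderOf_one] at hz
    omega
  have hζx : ζ • x0 ≠ x0 := by
    intro h
    apply hζ1
    apply FaithfulSMul.eq_of_smul_eq_smul (α := X)
    intro x
    obtain ⟨g, rfl⟩ := MulAction.exists_smul_eq G x0 x
    rw [smul_smul, ← comm, mul_smul, h, one_smul]
  have hζp : ζ ^ p = 1 := hz ▸ pow_orderOf_eq_one ζ
  -- ZMod powers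
  let Z : ZMod p → G := fun y => ζ ^ y.val
  have Zadd : ∀ y w, Z (y + w) = Z y * Z w := by
    intro y w
    simp only [Z]
    rw [← pow_add, ZMod.val_add, pow_mod_of hz]
  have Znat : ∀ n : ℕ, ζ ^ n = Z n := by
    intro n
    simp only [Z, ZMod.val_natCast]
    rw [pow_mod_of hz]
  -- block stabilizer
  let H : Subgroup G :=
    { carrier := {g | ∃ y, g • x0 = Z y • x0}
      one_mem' := ⟨0, by simp [Z]⟩
      mul_mem' := by
        rintro g h ⟨y, hy⟩ ⟨w, hw⟩
        refine ⟨w + y, ?_⟩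
        rw [mul_smul, hw, smul_smul, commp, mul_smul, hy, smul_smul, Zadd]
      inv_mem' := by
        rintro g ⟨y, hy⟩
        refine ⟨-y, ?_⟩
        rw [inv_smul_eq_iff, smul_smul, commp, mul_smul, hy, smul_smul, ← Zadd]
        simp [Z] }
  have hHmem : ∀ g, g ∈ H ↔ ∃ y, g • x0 = Z y • x0 := fun g => Iff.rfl
  have hSH : MulAction.stabilizer G x0 ≤ H := by
    intro g hg
    exact ⟨0, by rw [MulAction.mem_stabilizer_iff.mp hg]; simp [Z]⟩
  have hidx := Subgroup.relIndex_mul_index hSH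
  rw [MulAction.index_stabilizer_of_transitive, hX] at hidx
  have hHp : H.index = p := by
    have hdvd : H.index ∣ p ^ 2 := ⟨_, by rw [mul_comm]; exact hidx.symm⟩
    obtain ⟨k, hk2, hk⟩ := (Nat.dvd_prime_pow hp.out).mp hdvd
    interval_cases k
    · exfalso
      have htop : H = ⊤ := Subgroup.index_eq_one.mp (by simpa using hk)
      have hsur : Function.Surjective (fun y : ZMod p => Z y • x0) := by
        intro x
        obtain ⟨g, rfl⟩ := MulAction.exists_smul_eq G x0 x
        obtain ⟨y, hy⟩ := (hHmem g).mp (htop ▸ Subgroup.mem_top g)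
        exact ⟨y, hy.symm⟩
      have := Nat.card_le_card_of_surjective _ hsur
      rw [hX, Nat.card_zmod] at this
      nlinarith
    · simpa using hk
    · exfalso
      rw [hk] at hidx
      have h1 : (MulAction.stabilizer G x0).relIndex H = 1 :=
        Nat.eq_of_mul_eq_mul_right (pow_pos hp.out.pos 2 : 0 < p ^ 2) (by rw [hidx, one_mul])
      have h2 := Subgroup.relIndex_eq_one.mp h1
      have : ζ ∈ H := ⟨1, by
        have := Znat 1
        rw [pow_one, Nat.cast_one] at this
        rw [← this]⟩
      exact hζx (MulAction.mem_stabilizer_iff.mp (h2 this))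
  have hHn : H.Normal := by
    apply Subgroup.normal_of_index_eq_minFac_card
    obtain ⟨n, hn0, hn⟩ := hG.nontrivial_iff_card.mp inferInstance
    rw [hHp, hn, hp.out.pow_minFac (by omega)]
  have hcyc : IsCyclic (G ⧸ H) := isCyclic_of_prime_card (p := p) hHp
  have hcard : Nat.card (G ⧸ H) = p := hHp
  obtain ⟨e⟩ : Nonempty (G ⧸ H ≃* Multiplicative (ZMod p)) := by
    have := (zmodCyclicMulEquiv hcyc).symm
    rw [hcard] at this
    exact ⟨this⟩
  let t : G →* Multiplicative (ZMod p) := e.toMonoidHom.comp (QuotientGroup.mk' H)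
  have tsur : Function.Surjective t := e.surjective.comp (QuotientGroup.mk'_surjective H)
  have tker : ∀ g, t g = 1 ↔ g ∈ H := by
    intro g
    simp [t]
  choose s hs using fun b : ZMod p => tsur (Multiplicative.ofAdd b)
  have key : ∀ g : G, ∃ y, g • x0 = (Z y * s (t g).toAdd) • x0 := by
    intro g
    have : (s (t g).toAdd)⁻¹ * g ∈ H := by
      rw [← tker, map_mul, map_inv, hs]
      simp
    obtain ⟨y, hy⟩ := this
    refine ⟨y, ?_⟩
    rw [mul_smul, inv_smul_eq_iff, smul_smul, commp] at hy
    exact hy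
  choose k hk using key
  refine ⟨t, fun q => (Z q.2 * s q.1) • x0, fun g b => k (g * s b), tsur, ?_, ?_⟩
  · have hsur : Function.Surjective (fun q : ZMod p × ZMod p => (Z q.2 * s q.1) • x0) := by
      intro x
      obtain ⟨g, rfl⟩ := MulAction.exists_smul_eq G x0 x
      exact ⟨((t g).toAdd, k g), (hk g).symm⟩
    refine (Nat.bijective_iff_surjective_and_card _).mpr ⟨hsur, ?_⟩
    rw [Nat.card_prod, Nat.card_zmod, hX, sq]
  · intro g b y
    have := hk (g * s b)
    rw [map_mul, hs] at this
    simp only [toAdd_mul, toAdd_ofAdd] at this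
    dsimp only
    rw [smul_smul, ← mul_assoc, commp, mul_assoc, mul_smul, this, smul_smul, ← mul_assoc, Zadd,
      add_comm b]

end Coords

section Forward
variable {p : ℕ}

lemma shift_bij [hp : Fact p.Prime] (t : ZMod p) (f : ZMod p → ZMod p) :
    Function.Bijective (fun q : ZMod p × ZMod p => (q.1 + t, q.2 + f q.1)) := by
  apply (Finite.injective_iff_bijective).mp
  rintro ⟨a, x⟩ ⟨b, y⟩ h
  simp only [Prod.mk.injEq, add_left_inj] at h
  obtain ⟨rfl, h⟩ := h
  simpa using h

/-- The cycle set attached to an even map `Φ`. -/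
def mkCS [hp : Fact p.Prime] (Φ : ZMod p → ZMod p) (hΦ : ∀ A, Φ (-A) = Φ A) :
    CycleSet (ZMod p × ZMod p) where
  op u v := (v.1 + u.2, v.2 + Φ (v.1 - u.1))
  c1 := by
    rintro ⟨a, x⟩ ⟨b, y⟩ ⟨c, z⟩
    have h1 : Φ (a - b) = Φ (b - a) := by rw [← hΦ, neg_sub]
    simp only [Prod.mk.injEq]
    refine ⟨by rw [h1]; ring, ?_⟩
    rw [add_sub_add_right_eq_sub, add_sub_add_right_eq_sub]
    ring
  c2 := fun u => shift_bij u.2 (fun b => Φ (b - u.1))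
  c3 := by
    apply (Finite.injective_iff_bijective).mp
    rintro ⟨a, x⟩ ⟨b, y⟩ h
    simp only [Prod.mk.injEq, sub_self, add_left_inj] at h
    obtain ⟨h, rfl⟩ := h
    simpa using h

lemma mkCS_op [hp : Fact p.Prime] (Φ : ZMod p → ZMod p) (hΦ : ∀ A, Φ (-A) = Φ A)
    (a b x y : ZMod p) :
    (mkCS Φ hΦ).op (a, x) (b, y) = (b + x, y + Φ (b - a)) := rfl

lemma mkCS_irr [hp : Fact p.Prime] (Φ : ZMod p → ZMod p) (hΦ : ∀ A, Φ (-A) = Φ A)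
    (hn : ∃ i j : ZMod p, Φ i ≠ Φ j) : (mkCS Φ hΦ).Irretractable := by
  rintro ⟨a, x⟩ ⟨b, y⟩ h
  have h' : ∀ c, c + x = c + y ∧ Φ (c - a) = Φ (c - b) := by
    intro c
    have := congrFun h (c, 0)
    rw [mkCS_op, mkCS_op] at this
    simpa using this
  have hxy : x = y := by simpa using (h' 0).1
  subst hxy
  by_contra hab
  have hd : a - b ≠ 0 := fun h0 => hab (by rw [sub_eq_zero.mp h0])
  have hper : ∀ c, Φ (c + (a - b)) = Φ c := by
    intro c
    have := (h' (c + a)).2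
    rw [add_sub_cancel_right] at this
    rw [this, add_sub_assoc]
  have hper2 : ∀ (n : ℕ) c, Φ (c + n * (a - b)) = Φ c := by
    intro n
    induction n with
    | zero => intro c; simp
    | succ n ih =>
      intro c
      rw [← ih c, ← hper (c + n * (a - b))]
      congr 1
      push_cast
      ring
  obtain ⟨i, j, hij⟩ := hn
  apply hij
  have := hper2 ((i - j) / (a - b)).val j
  rw [ZMod.natCast_zmod_val, div_mul_cancel₀ _ hd] at this
  rw [← this]
  congr 1
  ring

lemma mkCS_indec [hp : Fact p.Prime] (Φ : ZMod p → ZMod p) (hΦ : ∀ A, Φ (-A) = Φ A)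
    (hn : ∃ i j : ZMod p, Φ i ≠ Φ j) : (mkCS Φ hΦ).Indecomposable := by
  set C := mkCS Φ hΦ with hC
  let R : ZMod p × ZMod p → ZMod p × ZMod p → Prop := fun u v => ∃ g ∈ C.permGroup, g u = v
  have Rrefl : ∀ u, R u u := fun u => ⟨1, one_mem _, rfl⟩
  have Rsymm : ∀ {u v}, R u v → R v u := by
    rintro u v ⟨g, hg, rfl⟩
    exact ⟨g⁻¹, inv_mem hg, by simp⟩
  have Rtrans : ∀ {u v w}, R u v → R v w → R u w := by
    rintro u v w ⟨g, hg, rfl⟩ ⟨h, hh, rfl⟩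
    exact ⟨h * g, mul_mem hh hg, rfl⟩
  have Rop : ∀ a x b y, R (b, y) (b + x, y + Φ (b - a)) := by
    intro a x b y
    exact ⟨C.sigma (a, x), Subgroup.subset_closure ⟨_, rfl⟩, rfl⟩
  obtain ⟨i, j, hij⟩ := hn
  have hd : Φ i - Φ j ≠ 0 := sub_ne_zero.mpr hij
  have R1 : ∀ c y, R (c, y) (c, y + (Φ i - Φ j)) := by
    intro c y
    have h1 := Rop (c - j) 0 c (y - Φ j)
    have h2 := Rop (c - i) 0 c (y - Φ j)
    rw [sub_sub_cancel, add_zero] at h1 h2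
    rw [sub_add_cancel] at h1
    have := Rtrans (Rsymm h1) h2
    rwa [show y - Φ j + Φ i = y + (Φ i - Φ j) by ring] at this
  have R2 : ∀ (n : ℕ) c y, R (c, y) (c, y + n * (Φ i - Φ j)) := by
    intro n
    induction n with
    | zero => intro c y; simpa using Rrefl _
    | succ n ih =>
      intro c y
      have := Rtrans (ih c y) (R1 _ _)
      rwa [show y + n * (Φ i - Φ j) + (Φ i - Φ j) = y + (n + 1 : ℕ) * (Φ i - Φ j) by
        push_cast; ring] at this
  have R3 : ∀ c y z, R (c, y) (c, z) := by
    intro c y z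
    have := R2 ((z - y) / (Φ i - Φ j)).val c y
    rw [ZMod.natCast_zmod_val, div_mul_cancel₀ _ hd, add_sub_cancel] at this
    exact this
  rintro ⟨b, y⟩ ⟨c, z⟩
  have h := Rop 0 (c - b) b y
  rw [add_sub_cancel] at h
  exact Rtrans h (R3 _ _ _)

lemma mkCS_pgroup [hp : Fact p.Prime] (Φ : ZMod p → ZMod p) (hΦ : ∀ A, Φ (-A) = Φ A) :
    IsPGroup p (mkCS Φ hΦ).permGroup := by
  have key : ∀ g ∈ (mkCS Φ hΦ).permGroup, ∃ (t : ZMod p) (f : ZMod p → ZMod p),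
      ∀ b y, g (b, y) = (b + t, y + f b) := by
    intro g hg
    refine Subgroup.closure_induction (p := fun g _ => ∃ (t : ZMod p) (f : ZMod p → ZMod p),
      ∀ b y, g (b, y) = (b + t, y + f b)) ?_ ?_ ?_ ?_ hg
    · rintro _ ⟨⟨a, x⟩, rfl⟩
      exact ⟨x, fun b => Φ (b - a), fun b y => rfl⟩
    · exact ⟨0, fun _ => 0, by simp⟩
    · rintro g h _ _ ⟨t, f, hg⟩ ⟨s, k, hh⟩
      refine ⟨s + t, fun b => k b + f (b + s), fun b y => ?_⟩
      rw [Equiv.Perm.mul_apply, hh, hg, add_assoc, add_assoc]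
    · rintro g _ ⟨t, f, hg⟩
      refine ⟨-t, fun b => - f (b - t), fun b y => ?_⟩
      rw [Equiv.Perm.inv_eq_iff_eq, hg]
      simp [sub_eq_add_neg]
  have hpow : ∀ (g : Equiv.Perm (ZMod p × ZMod p)) (t : ZMod p) (f : ZMod p → ZMod p),
      (∀ b y, g (b, y) = (b + t, y + f b)) → ∀ n : ℕ, ∃ k : ZMod p → ZMod p,
        ∀ b y, (g ^ n) (b, y) = (b + n * t, y + k b) := by
    intro g t f hg n
    induction n with
    | zero => exact ⟨fun _ => 0, by simp⟩
    | succ n ih =>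
      obtain ⟨k, hk⟩ := ih
      refine ⟨fun b => k b + f (b + n * t), fun b y => ?_⟩
      rw [pow_succ', Equiv.Perm.mul_apply, hk, hg]
      ext
      · push_cast; ring
      · push_cast; ring
  have hpow2 : ∀ (g : Equiv.Perm (ZMod p × ZMod p)) (f : ZMod p → ZMod p),
      (∀ b y, g (b, y) = (b, y + f b)) → ∀ (n : ℕ) b y,
        (g ^ n) (b, y) = (b, y + n * f b) := by
    intro g f hg n
    induction n with
    | zero => simp
    | succ n ih =>
      intro b y
      rw [pow_succ', Equiv.Perm.mul_apply, ih, hg]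
      ext
      · rfl
      · push_cast; ring
  rintro ⟨g, hg⟩
  refine ⟨2, ?_⟩
  apply Subtype.ext
  change g ^ (p ^ 2) = 1
  obtain ⟨t, f, h⟩ := key g hg
  obtain ⟨k, hk⟩ := hpow g t f h p
  have hk' : ∀ b y, (g ^ p) (b, y) = (b, y + k b) := by
    intro b y
    rw [hk, CharP.cast_eq_zero, zero_mul, add_zero]
  rw [sq, pow_mul]
  ext1 ⟨b, y⟩
  rw [hpow2 _ k hk', CharP.cast_eq_zero, zero_mul, add_zero]
  rfl

end Forward

section Converse
variable {p : ℕ}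

lemma converse_good [hp : Fact p.Prime] {X : Type} (C : CycleSet X) (hX : Nat.card X = p ^ 2)
    (hI : C.Indecomposable) (hR : C.Irretractable) (hG : IsPGroup p C.permGroup) :
    ∃ (ψ : ZMod p × ZMod p → X) (T : ZMod p → ZMod p → ZMod p)
      (F : ZMod p → ZMod p → ZMod p → ZMod p),
      Function.Bijective ψ ∧ Good T F ∧
      ∀ a x b y, C.op (ψ (a, x)) (ψ (b, y)) = ψ (b + T a x, y + F a x b) := by
  have hXf : Finite X := Nat.finite_of_card_ne_zero (by
    rw [hX]; exact (pow_pos hp.out.pos 2).ne')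
  have hpre : MulAction.IsPretransitive C.permGroup X := ⟨fun x y => by
    obtain ⟨g, hg, h⟩ := hI x y
    exact ⟨⟨g, hg⟩, h⟩⟩
  obtain ⟨t, ψ, f, ht, hψ, hact⟩ := coords (G := C.permGroup) hX hG
  let S : X → C.permGroup := fun u => ⟨C.sigma u, Subgroup.subset_closure ⟨u, rfl⟩⟩
  have hS : ∀ u v, S u • v = C.op u v := fun u v => rfl
  let T : ZMod p → ZMod p → ZMod p := fun a x => (t (S (ψ (a, x)))).toAdd
  let F : ZMod p → ZMod p → ZMod p → ZMod p := fun a x b => f (S (ψ (a, x))) b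
  have hop : ∀ a x b y, C.op (ψ (a, x)) (ψ (b, y)) = ψ (b + T a x, y + F a x b) := by
    intro a x b y
    rw [← hS, hact]
  have hc1 : ∀ a x b y c, 
      (c + T a x + T (b + T a x) (y + F a x b) = c + T b y + T (a + T b y) (x + F b y a)) ∧
      (F a x c + F (b + T a x) (y + F a x b) (c + T a x)
        = F b y c + F (a + T b y) (x + F b y a) (c + T b y)) := by
    intro a x b y c
    have := C.c1 (ψ (a, x)) (ψ (b, y)) (ψ (c, 0))
    simp only [hop] at this
    have := hψ.1 this
    simpa using this
  refine ⟨ψ, T, F, hψ, ⟨?_, ?_, ?_, ?_⟩, hop⟩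
  · intro a x b y
    have := (hc1 a x b y 0).1
    linear_combination this
  · intro a x b y c
    have := (hc1 a x b y c).2
    linear_combination this
  · intro a x b y h1 h2
    have : ψ (a, x) = ψ (b, y) := by
      apply hR
      funext u
      obtain ⟨⟨c, z⟩, rfl⟩ := hψ.2 u
      rw [hop, hop, h1, h2]
    simpa using hψ.1 this
  · by_contra hcon
    push Not at hcon
    have hall : ∀ u, t (S u) = 1 := by
      intro u
      obtain ⟨⟨c, z⟩, rfl⟩ := hψ.2 u
      exact hcon c z
    have hker : C.permGroup ≤ t.ker.map C.permGroup.subtype := by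
      refine (Subgroup.closure_le _).mpr ?_
      rintro _ ⟨u, rfl⟩
      exact ⟨S u, hall u, rfl⟩
    obtain ⟨g, hg⟩ := ht (Multiplicative.ofAdd 1)
    obtain ⟨g', hg', h⟩ := hker g.2
    have : g' = g := Subtype.ext h
    subst this
    rw [MonoidHom.mem_ker.mp hg'] at hg
    have : (0 : ZMod p) = 1 := congrArg Multiplicative.toAdd hg
    exact zero_ne_one this

lemma converse_main [hp : Fact p.Prime] {X : Type} (C : CycleSet X) (hX : Nat.card X = p ^ 2)
    (hI : C.Indecomposable) (hR : C.Irretractable) (hG : IsPGroup p C.permGroup) :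
    ∃ Φ : ZMod p → ZMod p, (∃ i j : ZMod p, Φ i ≠ Φ j) ∧ (∀ A : ZMod p, Φ (-A) = Φ A) ∧
        ∃ D : CycleSet (ZMod p × ZMod p),
          (∀ a b x y : ZMod p, D.op (a, x) (b, y) = (b + x, y + Φ (b - a))) ∧
          C.Iso D := by
  obtain ⟨ψ, T, F, hψ, H, hop⟩ := converse_good C hX hI hR hG
  obtain ⟨κ, hκ, e, hT⟩ := core H
  let g : ZMod p → ZMod p := fun a => e a / κ
  have hg : ∀ a, κ * g a = e a := fun a => mul_div_cancel₀ _ hκ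
  have hT' : ∀ a x, T a (x - g a) = κ * x := by
    intro a x
    rw [hT, mul_sub, hg]
    ring
  obtain ⟨Φ, ⟨i, j, hij⟩, heven, hF⟩ := core_final (H.change g) hκ hT'
  have hF' : ∀ a x b, F a x b + g (b + T a x) - g b = Φ (b - a) := by
    intro a x b
    have := hF a (x + g a) b
    simpa using this
  have hT2 : ∀ a x, T a x = κ * (x + g a) := by
    intro a x
    rw [← hT', add_sub_cancel_right]
  have hev : ∀ A, κ * Φ (-A) = κ * Φ A := fun A => by rw [heven]
  refine ⟨fun A => κ * Φ A, ⟨i, j, fun h => hij (mul_left_cancel₀ hκ h)⟩, hev,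
    mkCS (fun A => κ * Φ A) hev, fun a b x y => rfl, ?_⟩
  let E := Equiv.ofBijective ψ hψ
  let m : ZMod p × ZMod p → ZMod p × ZMod p := fun q => (q.1, κ * (q.2 + g q.1))
  have hm : Function.Bijective m := by
    apply (Finite.injective_iff_bijective).mp
    rintro ⟨a, x⟩ ⟨b, y⟩ h
    simp only [m, Prod.mk.injEq] at h
    obtain ⟨rfl, h⟩ := h
    simpa using mul_left_cancel₀ hκ h
  refine ⟨m ∘ E.symm, hm.comp E.symm.bijective, ?_⟩
  intro u v
  obtain ⟨⟨a, x⟩, rfl⟩ := hψ.2 u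
  obtain ⟨⟨b, y⟩, rfl⟩ := hψ.2 v
  have hE : ∀ q, E.symm (ψ q) = q := fun q => E.symm_apply_apply q
  rw [hop]
  simp only [Function.comp_apply, hE, m]
  rw [mkCS_op, ← hF' a x b, hT2]
  ext
  · rfl
  · dsimp only
    ring

end Converse

theorem stmt9 {p : ℕ} (hp : p.Prime) :
    (∀ Φ : ZMod p → ZMod p, (∃ i j : ZMod p, Φ i ≠ Φ j) → (∀ A : ZMod p, Φ (-A) = Φ A) →
      ∃ C : CycleSet (ZMod p × ZMod p),
        (∀ a b x y : ZMod p, C.op (a, x) (b, y) = (b + x, y + Φ (b - a))) ∧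
        C.Indecomposable ∧ C.Irretractable ∧ IsPGroup p C.permGroup) ∧
    (∀ (X : Type) (C : CycleSet X), Nat.card X = p ^ 2 →
      C.Indecomposable → C.Irretractable → IsPGroup p C.permGroup →
      ∃ Φ : ZMod p → ZMod p, (∃ i j : ZMod p, Φ i ≠ Φ j) ∧ (∀ A : ZMod p, Φ (-A) = Φ A) ∧
        ∃ D : CycleSet (ZMod p × ZMod p),
          (∀ a b x y : ZMod p, D.op (a, x) (b, y) = (b + x, y + Φ (b - a))) ∧
          C.Iso D) := by
  have : Fact p.Prime := ⟨hp⟩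
  refine ⟨fun Φ hn hΦ => ⟨mkCS Φ hΦ, fun a b x y => rfl, mkCS_indec Φ hΦ hn,
    mkCS_irr Φ hΦ hn, mkCS_pgroup Φ hΦ⟩, ?_⟩
  intro X C hX hI hR hG
  exact converse_main C hX hI hR hG
end

section
/- Let (X,·) and (X,·′) be finite cycle set structures on the same set X, let φ be an automorphism of (X,·) and ψ an automorphism of (X,·′), and assume gcd(|𝒢(X,·)|·|𝒢(X,·′)|, ord(φ)·ord(ψ)) = 1. Then a bijection f : X → X is an isomorphism from the deformed cycle set (X,·_φ) to (X,·′_ψ) if and only if f is an isomorphism from (X,·) to (X,·′) and ψ = f∘φ∘f⁻¹. In particular, the automorphism group of (X,·_φ) is exactly the centralizer of φ in the automorphism group of (X,·). -/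
namespace CycleSet

variable {X : Type*}

theorem sigma_mem (C : CycleSet X) (x : X) : C.sigma x ∈ C.permGroup :=
  Subgroup.subset_closure ⟨x, rfl⟩

theorem sigma_c1 (C : CycleSet X) (x y : X) :
    C.sigma (C.op x y) * C.sigma x = C.sigma (C.op y x) * C.sigma y := by
  ext z
  exact C.c1 x y z

/-- The map `g ↦ σ_{g x} g`, i.e. addition of `σ_x` in the brace `𝒢(X)`. -/
noncomputable def addMap (C : CycleSet X) (x : X) (g : C.permGroup) : C.permGroup :=
  ⟨C.sigma (g.1 x), C.sigma_mem _⟩ * g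

theorem addMap_comm (C : CycleSet X) (x y : X) (g : C.permGroup) :
    C.addMap y (C.addMap x g) = C.addMap x (C.addMap y g) := by
  apply Subtype.ext
  have := C.sigma_c1 (g.1 x) (g.1 y)
  simp only [addMap, Subgroup.coe_mul, Equiv.Perm.mul_apply, sigma_apply, ← mul_assoc]
  rw [this]

/-- Reachability by iterated `addMap`. -/
def Reach (C : CycleSet X) (g h : C.permGroup) : Prop :=
  Relation.ReflTransGen (fun a b => ∃ x, b = C.addMap x a) g h

theorem reach_addMap (C : CycleSet X) (x : X) {g h : C.permGroup} (r : C.Reach g h) :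
    C.Reach (C.addMap x g) (C.addMap x h) := by
  induction r with
  | refl => exact Relation.ReflTransGen.refl
  | tail _ hb ih =>
    obtain ⟨y, rfl⟩ := hb
    exact ih.tail ⟨y, C.addMap_comm _ _ _⟩

theorem reach_mul [Finite X] (C : CycleSet X) (k : Equiv.Perm X) (hk : k ∈ C.permGroup) :
    ∀ g : C.permGroup, C.Reach g (⟨k, hk⟩ * g) := by
  have hk' : k ∈ Submonoid.closure (Set.range C.sigma) := by
    rw [← Subgroup.closure_toSubmonoid_of_finite]
    exact hk
  have key : ∀ k ∈ Submonoid.closure (Set.range C.sigma), ∃ hk : k ∈ C.permGroup,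
      ∀ g : C.permGroup, C.Reach g (⟨k, hk⟩ * g) := by
    intro k hk
    induction hk using Submonoid.closure_induction with
    | mem k h =>
      obtain ⟨y, rfl⟩ := h
      refine ⟨C.sigma_mem y, fun g => Relation.ReflTransGen.single ⟨g.1⁻¹ y, ?_⟩⟩
      simp [addMap]
    | one => exact ⟨one_mem _, fun g => by
        have : (⟨1, one_mem _⟩ : C.permGroup) * g = g := one_mul g
        rw [this]; exact Relation.ReflTransGen.refl⟩
    | mul a b _ _ iha ihb =>
      obtain ⟨ha, iha⟩ := iha
      obtain ⟨hb, ihb⟩ := ihb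
      refine ⟨mul_mem ha hb, fun g => (ihb g).trans ?_⟩
      have := iha (⟨b, hb⟩ * g)
      rwa [← mul_assoc] at this
  exact (key k hk').2

theorem reach_all [Finite X] (C : CycleSet X) (g h : C.permGroup) : C.Reach g h := by
  have := C.reach_mul (h * g⁻¹).1 (h * g⁻¹).2 g
  rwa [Subtype.coe_eta, inv_mul_cancel_right] at this

theorem addMap_bijective [Finite X] (C : CycleSet X) (x : X) :
    Function.Bijective (C.addMap x) := by
  rw [← Finite.surjective_iff_bijective]
  have key : ∀ g h, C.Reach (C.addMap x g) h → ∃ g', C.addMap x g' = h := by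
    intro g h r
    induction r with
    | refl => exact ⟨g, rfl⟩
    | tail _ hb ih =>
      obtain ⟨y, rfl⟩ := hb
      obtain ⟨g', rfl⟩ := ih
      exact ⟨C.addMap y g', C.addMap_comm _ _ _⟩
  intro h
  exact key h h (C.reach_all _ _)

/-- `addMap` as a permutation. -/
noncomputable def addPerm [Finite X] (C : CycleSet X) (x : X) : Equiv.Perm C.permGroup :=
  Equiv.ofBijective (C.addMap x) (C.addMap_bijective x)

theorem addPerm_pow_card [Finite X] (C : CycleSet X) (x : X) :
    C.addPerm x ^ Nat.card C.permGroup = 1 := by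
  have hcomm : ∀ a ∈ Set.range C.addPerm, ∀ b ∈ Set.range C.addPerm, a * b = b * a := by
    rintro _ ⟨a, rfl⟩ _ ⟨b, rfl⟩
    exact Equiv.ext fun g => C.addMap_comm b a g
  let P := Subgroup.closure (Set.range C.addPerm)
  have hP : ∀ a ∈ P, ∀ b ∈ P, a * b = b * a := by
    intro a ha b hb
    have := (Subgroup.isMulCommutative_closure hcomm).is_comm.comm ⟨a, ha⟩ ⟨b, hb⟩
    exact congrArg Subtype.val this
  have htrans : ∀ h : C.permGroup, ∃ p ∈ P, p 1 = h := by
    intro h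
    have r := C.reach_all 1 h
    induction r with
    | refl => exact ⟨1, one_mem _, rfl⟩
    | tail _ hb ih =>
      obtain ⟨y, rfl⟩ := hb
      obtain ⟨p, hp, rfl⟩ := ih
      exact ⟨C.addPerm y * p, mul_mem (Subgroup.subset_closure ⟨y, rfl⟩) hp, rfl⟩
  have hbij : Function.Bijective (fun p : P => p.1 1) := by
    constructor
    · intro p q hpq
      apply Subtype.ext
      ext1 h
      obtain ⟨r, hr, rfl⟩ := htrans h
      have e1 := congrArg (fun s : Equiv.Perm C.permGroup => s 1) (hP p.1 p.2 r hr)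
      have e2 := congrArg (fun s : Equiv.Perm C.permGroup => s 1) (hP q.1 q.2 r hr)
      simp only [Equiv.Perm.mul_apply] at e1 e2 hpq
      rw [e1, e2, hpq]
    · intro h
      obtain ⟨p, hp, e⟩ := htrans h
      exact ⟨⟨p, hp⟩, e⟩
  have hcard : Nat.card P = Nat.card C.permGroup := Nat.card_eq_of_bijective _ hbij
  have : (⟨C.addPerm x, Subgroup.subset_closure ⟨x, rfl⟩⟩ : P) ^ Nat.card P = 1 := pow_card_eq_one'
  rw [hcard] at this
  exact congrArg Subtype.val this

/-- The permutation `σ_{k x}`. -/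
noncomputable def S (C : CycleSet X) (x : X) : ℕ → Equiv.Perm X
  | 0 => 1
  | k + 1 => C.sigma (S C x k x) * S C x k

theorem S_eq_addPerm [Finite X] (C : CycleSet X) (x : X) (k : ℕ) :
    C.S x k = ((C.addPerm x ^ k) 1).1 := by
  induction k with
  | zero => rfl
  | succ k ih =>
    rw [pow_succ', S, ih]
    rfl

theorem S_eq_one [Finite X] (C : CycleSet X) (x : X) (k : ℕ) (hk : Nat.card C.permGroup ∣ k) :
    C.S x k = 1 := by
  obtain ⟨m, rfl⟩ := hk
  rw [S_eq_addPerm, pow_mul, addPerm_pow_card]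
  simp

theorem S_deform (C D : CycleSet X) (φ : Equiv.Perm X)
    (hφ : ∀ x y : X, φ (C.op x y) = C.op (φ x) (φ y))
    (hD : ∀ x y : X, D.op x y = φ (C.op x y)) (x : X) (k : ℕ) :
    D.S x k = φ ^ k * C.S x k := by
  have hφk : ∀ (k : ℕ) (x y : X), (φ ^ k) (C.op x y) = C.op ((φ ^ k) x) ((φ ^ k) y) := by
    intro k
    induction k with
    | zero => intro x y; rfl
    | succ k ih =>
      intro x y
      simp only [pow_succ', Equiv.Perm.mul_apply, ih, hφ]
  induction k with
  | zero => rfl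
  | succ k ih =>
    rw [S, ih, S]
    ext y
    simp only [pow_succ', Equiv.Perm.mul_apply, sigma_apply, hD, hφk]

theorem S_iso (D D' : CycleSet X) (f : Equiv.Perm X)
    (hf : ∀ x y : X, f (D.op x y) = D'.op (f x) (f y)) (x : X) (k : ℕ) (y : X) :
    f (D.S x k y) = D'.S (f x) k (f y) := by
  induction k generalizing y with
  | zero => rfl
  | succ k ih => simp only [S, Equiv.Perm.mul_apply, sigma_apply, hf, ih]

theorem main [Finite X] (C C' : CycleSet X) (φ ψ : Equiv.Perm X)
    (hφ : ∀ x y : X, φ (C.op x y) = C.op (φ x) (φ y))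
    (hψ : ∀ x y : X, ψ (C'.op x y) = C'.op (ψ x) (ψ y))
    (hgcd : Nat.gcd (Nat.card C.permGroup * Nat.card C'.permGroup)
      (orderOf φ * orderOf ψ) = 1)
    (D D' : CycleSet X)
    (hD : ∀ x y : X, D.op x y = φ (C.op x y))
    (hD' : ∀ x y : X, D'.op x y = ψ (C'.op x y)) (f : Equiv.Perm X) :
      (∀ x y : X, f (D.op x y) = D'.op (f x) (f y)) ↔
      ((∀ x y : X, f (C.op x y) = C'.op (f x) (f y)) ∧ ψ = f * φ * f⁻¹) := by
  constructor
  · intro hf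
    obtain ⟨k, hk0, hk1⟩ := Nat.chineseRemainder hgcd 0 1
    have hk0 := (Nat.modEq_zero_iff_dvd).1 hk0
    have e1 : φ ^ k = φ := by
      conv_rhs => rw [← pow_one φ]
      exact pow_eq_pow_iff_modEq.2 (hk1.of_mul_right _)
    have e2 : ψ ^ k = ψ := by
      conv_rhs => rw [← pow_one ψ]
      exact pow_eq_pow_iff_modEq.2 (hk1.of_mul_left _)
    have key : ∀ x, f (φ x) = ψ (f x) := by
      intro x
      have := S_iso D D' f hf x k x
      rw [S_deform C D φ hφ hD, S_deform C' D' ψ hψ hD',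
        S_eq_one C x k ((Dvd.intro _ rfl).trans hk0),
        S_eq_one C' (f x) k ((Dvd.intro_left _ rfl).trans hk0), e1, e2] at this
      simpa using this
    refine ⟨fun x y => ?_, ?_⟩
    · have := hf x y
      rw [hD, hD', key] at this
      exact ψ.injective this
    · rw [eq_mul_inv_iff_mul_eq]
      ext x
      exact (key x).symm
  · rintro ⟨hf, rfl⟩ x y
    rw [hD, hD', ← hf]
    simp

end CycleSet

theorem stmt16 {X : Type*} [Finite X] (C C' : CycleSet X) (φ ψ : Equiv.Perm X)
    (hφ : ∀ x y : X, φ (C.op x y) = C.op (φ x) (φ y))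
    (hψ : ∀ x y : X, ψ (C'.op x y) = C'.op (ψ x) (ψ y))
    (hgcd : Nat.gcd (Nat.card C.permGroup * Nat.card C'.permGroup)
      (orderOf φ * orderOf ψ) = 1)
    (D D' : CycleSet X)
    (hD : ∀ x y : X, D.op x y = φ (C.op x y))
    (hD' : ∀ x y : X, D'.op x y = ψ (C'.op x y)) :
    (∀ f : Equiv.Perm X,
      (∀ x y : X, f (D.op x y) = D'.op (f x) (f y)) ↔
      ((∀ x y : X, f (C.op x y) = C'.op (f x) (f y)) ∧ ψ = f * φ * f⁻¹)) ∧
    (∀ f : Equiv.Perm X,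
      (∀ x y : X, f (D.op x y) = D.op (f x) (f y)) ↔
      ((∀ x y : X, f (C.op x y) = C.op (f x) (f y)) ∧ f * φ = φ * f)) := by
  refine ⟨fun f => CycleSet.main C C' φ ψ hφ hψ hgcd D D' hD hD' f, fun f => ?_⟩
  have h1 : Nat.Coprime (Nat.card C.permGroup) (orderOf φ) :=
    Nat.Coprime.coprime_mul_right (Nat.Coprime.coprime_mul_right_right hgcd)
  have h2 : Nat.Coprime (Nat.card C.permGroup * Nat.card C.permGroup)
      (orderOf φ * orderOf φ) :=
    Nat.Coprime.mul_left (h1.mul_right h1) (h1.mul_right h1)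
  rw [CycleSet.main C C φ φ hφ hφ h2 D D hD hD f, eq_mul_inv_iff_mul_eq]
  exact and_congr_right fun _ => eq_comm
end
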